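/- arXiv:2504.17909 — 2 statements merged into one kernel-verified Lean document; each statement's English description precedes it below -/
import Mathlib

section
/- Let ℓ, k ≥ 0 be integers and D a reduced effective divisor on P¹ such that ℓ ≥ 3k and ℓ ≥ deg D (the small range). Then Φ^{ir}(ℓ,k,D) = [ q^{4ℓ−6k+4−deg D} − q^{3ℓ−3k+3} if ℓ−3k ≥ deg D, else 0 ] + O(3^{ω(D)} q^{3ℓ−5k}), with implied constant depending only on q. -/
/-!
Statement 17.  The small-range estimate for the adjusted root-counting sum
`Φ^{ir}(ℓ,k,D)` over the horizontally irreducible binary cubic forms on the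
Hirzebruch surface `F_k` over `F_q`.
-/
open scoped Classical

noncomputable section

namespace Stmt17

/-- Closed points of the projective line `P¹` over `F_q`: `none` is the point at
infinity, and `some p` corresponds to the monic irreducible polynomial `p`. -/
abbrev P1Pt (Fq : Type) [Field Fq] : Type :=
  Option {p : Polynomial Fq // p.Monic ∧ Irreducible p}

variable {Fq : Type} [Field Fq]

/-- The degree of a closed point of `P¹`. -/
def P1Pt.deg : P1Pt Fq → ℕ
  | none => 1
  | some p => p.1.natDegree

/-- The residue field of a closed point of `P¹`. -/
def P1Pt.Res : P1Pt Fq → Type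
  | none => Fq
  | some p => AdjoinRoot p.1

instance (P : P1Pt Fq) : CommRing (P1Pt.Res P) :=
  match P with
  | none => inferInstanceAs (CommRing Fq)
  | some p => inferInstanceAs (CommRing (AdjoinRoot p.1))

instance (P : P1Pt Fq) : Algebra Fq (P1Pt.Res P) :=
  match P with
  | none => Algebra.id Fq
  | some p => inferInstanceAs (Algebra Fq (AdjoinRoot p.1))

/-- The homogeneous coordinates `(t₀ : t₁)` of a closed point of `P¹`, in its residue
field: `(1 : 0)` for the point at infinity, and `(θ : 1)` with `θ` the root of `p`
for the point `some p`. -/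
def P1Pt.coords : (P : P1Pt Fq) → Fin 2 → P1Pt.Res P
  | none => ![1, 0]
  | some p => ![AdjoinRoot.root p.1, 1]

/-- Evaluate a polynomial in the homogeneous coordinates `t₀, t₁` of the base `P¹`
at a closed point `P`, in the residue field of `P`. -/
def resEval (P : P1Pt Fq) (A : MvPolynomial (Fin 2) Fq) : P1Pt.Res P :=
  MvPolynomial.aeval (P1Pt.coords P) A

/-- `r_P(s)`: the number of relative degree one points of the fiber of `F_k → P¹`
over `P` at which the binary cubic form `s = (A₀, A₁, A₂, A₃)` vanishes.  These
points are the `(z : 1)` with `z` in the residue field of `P`, together with `(1 : 0)`. -/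
def rP (P : P1Pt Fq) (s : Fin 4 → MvPolynomial (Fin 2) Fq) : ℕ :=
  Nat.card {z : P1Pt.Res P //
      resEval P (s 0) * z ^ 3 + resEval P (s 1) * z ^ 2
        + resEval P (s 2) * z + resEval P (s 3) = 0} +
    (if resEval P (s 0) = 0 then 1 else 0)

/-- The degree of a reduced effective divisor (a finite set of closed points) on `P¹`. -/
def degD (D : Finset (P1Pt Fq)) : ℕ := ∑ P ∈ D, P1Pt.deg P

/-- `r_D(s) = ∏_{P ∣ D} r_P(s)`. -/
def rD (D : Finset (P1Pt Fq)) (s : Fin 4 → MvPolynomial (Fin 2) Fq) : ℕ :=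
  ∏ P ∈ D, rP P s

/-- `a_D(s) = ∏_{P ∣ D} (r_P(s) − 1)`. -/
def aD (D : Finset (P1Pt Fq)) (s : Fin 4 → MvPolynomial (Fin 2) Fq) : ℤ :=
  ∏ P ∈ D, ((rP P s : ℤ) - 1)

/-- `p` is homogeneous of (possibly negative) degree `d`; for `d < 0` this forces
`p = 0`. -/
def IsHomOfDeg (p : MvPolynomial (Fin 2) Fq) (d : ℤ) : Prop :=
  p.IsHomogeneous d.toNat ∧ (d < 0 → p = 0)

/-- The space of global sections of `O(m, ℓ)` on the Hirzebruch surface `F_k`,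
viewed as tuples `(A₀, …, A_m)` of binary forms with `A_i` homogeneous of degree
`ℓ − i·k`. -/
def SecSet (m ℓ k : ℕ) : Set (Fin (m + 1) → MvPolynomial (Fin 2) Fq) :=
  {s | ∀ i : Fin (m + 1), IsHomOfDeg (s i) ((ℓ : ℤ) - (i : ℕ) * k)}

/-- A binary cubic form `s ∈ H⁰(F_k, O(3,ℓ))` is horizontally reducible iff it is
zero or factors as a product of a nonzero quadratic and a nonzero linear form in
`x, y` with homogeneous polynomial coefficients. -/
def HorizRed (k : ℕ) (s : Fin 4 → MvPolynomial (Fin 2) Fq) : Prop :=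
  s = 0 ∨ ∃ (b c : ℤ) (B : Fin 3 → MvPolynomial (Fin 2) Fq)
      (C : Fin 2 → MvPolynomial (Fin 2) Fq),
    B ≠ 0 ∧ C ≠ 0 ∧
    (∀ j : Fin 3, IsHomOfDeg (B j) (b - (j : ℕ) * k)) ∧
    (∀ j : Fin 2, IsHomOfDeg (C j) (c - (j : ℕ) * k)) ∧
    s 0 = B 0 * C 0 ∧ s 1 = B 0 * C 1 + B 1 * C 0 ∧
    s 2 = B 1 * C 1 + B 2 * C 0 ∧ s 3 = B 2 * C 1

/-!
Put `q = |F_q|`. A section with `A₃ = 0` is divisible by `x`, hence horizontally reducible, so only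
sections with `A₃ ≠ 0` matter.

Sum `a_D` over all of these, first over `A₀`. Since `deg D ≤ ℓ + 1`, the values of a form of degree
`ℓ` at the points of `D` are independent and uniformly distributed. For fixed `A₁, A₂, A₃`, the
numbers `r_P - 1` sum to `q ^ deg P` over the values of `A₀` at `P` if `A₃` vanishes at `P`, and to
`0` otherwise. Hence only the `A₃` divisible by `D` contribute, and counting them gives the main
term.

A reducible section with `A₃ ≠ 0` is a product of a quadratic section `B` of degree `b` and a linear
section `C` of degree `ℓ - b`, with `2k ≤ b ≤ ℓ - k`. At each `P` we have `|r_P(BC) - 1| ≤ 2` unless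
`B` or `C` vanishes on the whole fiber, which happens for at most a fraction `|P|⁻³` of the `B` and
`|P|⁻²` of the `C`, where `|P| = q ^ deg P`. On average `P` then contributes a factor of at most
`2 (1 + |P|⁻² / 2) (1 + |P|⁻¹ / 2) < 3`. There are at most `q ^ (2ℓ - 4k + b + 5)` pairs `(B, C)`,
and summing over `b` gives the error term.
-/

section RootCount

variable {R : Type*} [CommRing R]

/-- The number of zeros on the projective line over `R` of the binary cubic form with
coefficients `v 0, …, v 3`. For `v` the restriction of `s` to the fiber over `P`, this is
`r_P(s)`. -/
def projRootCount (v : Fin 4 → R) : ℕ :=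
  Nat.card {z : R // v 0 * z ^ 3 + v 1 * z ^ 2 + v 2 * z + v 3 = 0} + if v 0 = 0 then 1 else 0

lemma projRootCount_zero : projRootCount (0 : Fin 4 → R) = Nat.card R + 1 := by
  simp [projRootCount, Nat.card_congr (Equiv.subtypeUnivEquiv fun _ : R ↦ trivial)]

lemma natCard_cubic_zeros_le_natDegree [IsDomain R] {p : Cubic R} (hp : p ≠ 0) :
    Nat.card {z : R // p.a * z ^ 3 + p.b * z ^ 2 + p.c * z + p.d = 0} ≤ p.toPoly.natDegree := by
  have hp' : p.toPoly ≠ 0 := by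
    rwa [← Cubic.zero, Ne, Cubic.toPoly_injective]
  have hset : {z : R | p.a * z ^ 3 + p.b * z ^ 2 + p.c * z + p.d = 0} = p.toPoly.rootSet R := by
    ext z
    rw [Set.mem_ofPred_eq, Polynomial.mem_rootSet_of_ne hp']
    simp [Cubic.toPoly]
  calc Nat.card {z : R // p.a * z ^ 3 + p.b * z ^ 2 + p.c * z + p.d = 0}
      = (p.toPoly.rootSet R).ncard := by rw [← hset, ← Nat.card_coe_set_eq]; rfl
    _ ≤ p.toPoly.natDegree := p.toPoly.ncard_rootSet_le R

lemma projRootCount_le_three [IsDomain R] {v : Fin 4 → R} (hv : v ≠ 0) :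
    projRootCount v ≤ 3 := by
  let p : Cubic R := ⟨v 0, v 1, v 2, v 3⟩
  have hp : p ≠ 0 := fun h ↦ hv <| by
    ext i
    fin_cases i
    exacts [congrArg Cubic.a h, congrArg Cubic.b h, congrArg Cubic.c h, congrArg Cubic.d h]
  have hroots := natCard_cubic_zeros_le_natDegree hp
  unfold projRootCount
  split_ifs with h0
  · have := Cubic.natDegree_of_a_eq_zero (P := p) h0
    lia
  · have := Cubic.natDegree_of_a_ne_zero (P := p) h0
    lia

lemma abs_projRootCount_sub_one_le_two [IsDomain R] {v : Fin 4 → R} (hv : v ≠ 0) :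
    |(projRootCount v : ℤ) - 1| ≤ 2 := by
  have := projRootCount_le_three hv
  rw [abs_le]
  lia

lemma sum_boole_mul_pow_add_eq_zero [IsDomain R] [Fintype R] (z e : R) {n : ℕ} (hn : n ≠ 0) :
    ∑ a : R, (if a * z ^ n + e = 0 then 1 else 0 : ℤ) =
      1 + if z = 0 then (if e = 0 then (Nat.card R : ℤ) else 0) - 1 else 0 := by
  rcases eq_or_ne z 0 with rfl | hz
  · by_cases he : e = 0 <;> simp [hn, he]
  · have hinj : Function.Injective fun a : R ↦ a * z ^ n + e :=
      (add_left_injective e).comp (mul_left_injective₀ (pow_ne_zero n hz))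
    obtain ⟨a₀, ha₀⟩ := Finite.surjective_of_injective hinj 0
    have hiff (a : R) : a * z ^ n + e = 0 ↔ a = a₀ := by
      rw [← ha₀]
      exact hinj.eq_iff
    simp [hiff, hz]

/-- Double counting: for `z ≠ 0` exactly one leading coefficient makes `z` a zero. -/
lemma sum_projRootCount_cons_sub_one [IsDomain R] [Fintype R] (t : Fin 3 → R) :
    ∑ a : R, ((projRootCount (Fin.cons a t : Fin 4 → R) : ℤ) - 1) =
      if t 2 = 0 then (Nat.card R : ℤ) else 0 := by
  have hcount (a : R) : (projRootCount (Fin.cons a t : Fin 4 → R) : ℤ) =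
      ∑ z : R, (if a * z ^ 3 + (t 0 * z ^ 2 + t 1 * z + t 2) = 0 then 1 else 0 : ℤ) +
        if a = 0 then 1 else 0 := by
    change ((Nat.card {z : R // a * z ^ 3 + t 0 * z ^ 2 + t 1 * z + t 2 = 0} +
      if a = 0 then 1 else 0 : ℕ) : ℤ) = _
    simp [Fintype.card_subtype, add_assoc]
  have hswap : ∑ a : R, ∑ z : R,
      (if a * z ^ 3 + (t 0 * z ^ 2 + t 1 * z + t 2) = 0 then 1 else 0 : ℤ) =
        Nat.card R + ((if t 2 = 0 then (Nat.card R : ℤ) else 0) - 1) := by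
    rw [Finset.sum_comm]
    simp_rw [sum_boole_mul_pow_add_eq_zero _ _ three_ne_zero, Finset.sum_add_distrib]
    simp
  simp only [hcount, Finset.sum_sub_distrib, Finset.sum_add_distrib, hswap]
  simp only [Finset.sum_ite_eq', Finset.mem_univ, if_true, Finset.sum_const, Finset.card_univ,
    Nat.card_eq_fintype_card, nsmul_eq_mul, mul_one]
  ring

/-- The coefficients of the binary cubic form
`(B 0 x² + B 1 xy + B 2 y²) (C 0 x + C 1 y)`. -/
def quadMulLin (B : Fin 3 → R) (C : Fin 2 → R) : Fin 4 → R :=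
  ![B 0 * C 0, B 0 * C 1 + B 1 * C 0, B 1 * C 1 + B 2 * C 0, B 2 * C 1]

lemma eq_zero_or_eq_zero_of_quadMulLin_eq_zero [NoZeroDivisors R] {B : Fin 3 → R} {C : Fin 2 → R}
    (h : quadMulLin B C = 0) : B = 0 ∨ C = 0 := by
  have h0 : B 0 * C 0 = 0 := congrFun h 0
  have h1 : B 0 * C 1 + B 1 * C 0 = 0 := congrFun h 1
  have h2 : B 1 * C 1 + B 2 * C 0 = 0 := congrFun h 2
  have h3 : B 2 * C 1 = 0 := congrFun h 3
  simp only [funext_iff, Fin.forall_fin_succ]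
  by_cases hC0 : C 0 = 0 <;> by_cases hC1 : C 1 = 0 <;> simp_all

/-- The weight of the restriction `v` of a section to a fiber with residue field `R`. It is chosen
so that `2 * zeroWeight B * zeroWeight C` dominates `|r_P - 1|` for the product of `B` and `C`,
also when that product vanishes on the fiber and `r_P - 1 = |R|`. -/
def zeroWeight {n : ℕ} (v : Fin n → R) : ℚ :=
  1 + if v = 0 then (Nat.card R : ℚ) / 2 else 0

lemma one_le_zeroWeight {n : ℕ} (v : Fin n → R) : 1 ≤ zeroWeight v := by
  rw [zeroWeight, le_add_iff_nonneg_right]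
  positivity

lemma natCard_le_two_mul_zeroWeight_zero {n : ℕ} :
    (Nat.card R : ℚ) ≤ 2 * zeroWeight (0 : Fin n → R) := by
  simp only [zeroWeight, if_true]
  linarith

lemma abs_projRootCount_quadMulLin_sub_one_le [IsDomain R] (B : Fin 3 → R) (C : Fin 2 → R) :
    |(projRootCount (quadMulLin B C) : ℚ) - 1| ≤ 2 * zeroWeight B * zeroWeight C := by
  have hB := one_le_zeroWeight B
  have hC := one_le_zeroWeight C
  by_cases hBC : quadMulLin B C = 0
  · have hcard : |(projRootCount (quadMulLin B C) : ℚ) - 1| = Nat.card R := by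
      simp [hBC, projRootCount_zero]
    rw [hcard]
    rcases eq_zero_or_eq_zero_of_quadMulLin_eq_zero hBC with rfl | rfl
    · have := natCard_le_two_mul_zeroWeight_zero (R := R) (n := 3)
      nlinarith
    · have := natCard_le_two_mul_zeroWeight_zero (R := R) (n := 2)
      nlinarith
  · calc |(projRootCount (quadMulLin B C) : ℚ) - 1| ≤ 2 := by
          exact_mod_cast abs_projRootCount_sub_one_le_two hBC
      _ ≤ 2 * zeroWeight B * zeroWeight C := by nlinarith

end RootCount

section Points

instance (P : P1Pt Fq) : IsDomain (P1Pt.Res P) :=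
  match P with
  | none => inferInstanceAs (IsDomain Fq)
  | some p => AdjoinRoot.isDomain_of_prime p.2.2.prime

instance (P : P1Pt Fq) : Module.Finite Fq (P1Pt.Res P) :=
  match P with
  | none => inferInstanceAs (Module.Finite Fq Fq)
  | some p => (AdjoinRoot.powerBasis p.2.2.ne_zero).finite

instance [Finite Fq] (P : P1Pt Fq) : Finite (P1Pt.Res P) := Module.finite_of_finite Fq

instance [Finite Fq] (P : P1Pt Fq) : Fintype (P1Pt.Res P) := Fintype.ofFinite _

lemma P1Pt.finrank_res (P : P1Pt Fq) : Module.finrank Fq (P1Pt.Res P) = P.deg :=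
  match P with
  | none => Module.finrank_self Fq
  | some p => (AdjoinRoot.powerBasis p.2.2.ne_zero).finrank

lemma P1Pt.natCard_res [Finite Fq] (P : P1Pt Fq) :
    Nat.card (P1Pt.Res P) = Nat.card Fq ^ P.deg := by
  rw [Module.natCard_eq_pow_finrank (K := Fq), P.finrank_res]

lemma P1Pt.natCard_le_natCard_res [Finite Fq] (P : P1Pt Fq) :
    Nat.card Fq ≤ Nat.card (P1Pt.Res P) :=
  Nat.card_le_card_of_injective _ (algebraMap Fq (P1Pt.Res P)).injective

lemma prod_natCard_res [Finite Fq] (D : Finset (P1Pt Fq)) :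
    ∏ P ∈ D, Nat.card (P1Pt.Res P) = Nat.card Fq ^ degD D := by
  simp_rw [P1Pt.natCard_res, Finset.prod_pow_eq_pow_sum, degD]

@[simp]
lemma degD_empty : degD (∅ : Finset (P1Pt Fq)) = 0 :=
  Finset.sum_empty

/-- The monic polynomial cutting out the affine part of a closed point. -/
def P1Pt.pol : P1Pt Fq → Polynomial Fq
  | none => 1
  | some p => p.1

lemma P1Pt.monic_pol : ∀ P : P1Pt Fq, P.pol.Monic
  | none => Polynomial.monic_one
  | some p => p.2.1

lemma P1Pt.pairwise_isCoprime_pol :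
    Pairwise fun P Q : P1Pt Fq ↦ IsCoprime P.pol Q.pol := by
  rintro (_ | p) (_ | r) hne
  · exact isCoprime_one_left
  · exact isCoprime_one_left
  · exact isCoprime_one_right
  · refine (p.2.2.coprime_iff_not_dvd).2 fun hdvd ↦ hne <| congrArg some <| Subtype.ext ?_
    exact Polynomial.eq_of_monic_of_associated p.2.1 r.2.1 (p.2.2.associated_of_dvd r.2.2 hdvd)

lemma degD_eq_natDegree_prod_pol_add (D : Finset (P1Pt Fq)) :
    degD D = (∏ P ∈ D, P.pol).natDegree + if none ∈ D then 1 else 0 := by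
  have hdeg (P : P1Pt Fq) : P.deg = P.pol.natDegree + if P = none then 1 else 0 := by
    cases P <;> simp [P1Pt.pol, P1Pt.deg]
  rw [Polynomial.natDegree_prod_of_monic _ _ fun P _ ↦ P.monic_pol, degD]
  simp only [hdeg, Finset.sum_add_distrib, Finset.sum_ite_eq']

lemma resEval_some_homogenize_eq_zero_iff (p : {p : Polynomial Fq // p.Monic ∧ Irreducible p})
    {d : ℕ} {G : Polynomial Fq} (hG : G.natDegree ≤ d) :
    resEval (some p) (G.homogenize d) = 0 ↔ p.1 ∣ G := by
  have hmk : resEval (some p) (G.homogenize d) = AdjoinRoot.mk p.1 G :=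
    (Polynomial.aeval_homogenize_of_eq_one (A := AdjoinRoot p.1) hG
      ![AdjoinRoot.root p.1, 1] rfl).trans (AdjoinRoot.aeval_eq G)
  rw [hmk]
  exact AdjoinRoot.mk_eq_zero

lemma resEval_none_homogenize (d : ℕ) (G : Polynomial Fq) :
    resEval none (G.homogenize d) = G.coeff d := by
  change MvPolynomial.aeval (![1, 0] : Fin 2 → Fq) (G.homogenize d) = G.coeff d
  rw [Polynomial.homogenize, map_sum, Finset.sum_eq_single_of_mem (d, 0) (by simp)]
  · simp [MvPolynomial.aeval_monomial, Finsupp.prod_fintype]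
  · rintro ⟨i, j⟩ hij hne
    have hj : j ≠ 0 := by
      rintro rfl
      exact hne (by simpa using hij)
    simp [MvPolynomial.aeval_monomial, Finsupp.prod_fintype, hj]

end Points

section Forms

/-- The space of binary forms of degree `d` vanishing on the divisor `D`, that is,
`H⁰(P¹, O(d − D))`. -/
def vanishingForms (d : ℕ) (D : Finset (P1Pt Fq)) :
    Submodule Fq (MvPolynomial (Fin 2) Fq) :=
  MvPolynomial.homogeneousSubmodule (Fin 2) Fq d ⊓
    ⨅ P ∈ D, LinearMap.ker (MvPolynomial.aeval P.coords).toLinearMap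

variable {d : ℕ} {D : Finset (P1Pt Fq)} {f : MvPolynomial (Fin 2) Fq}

lemma mem_vanishingForms :
    f ∈ vanishingForms d D ↔ f.IsHomogeneous d ∧ ∀ P ∈ D, resEval P f = 0 := by
  simp [vanishingForms, resEval]

lemma mem_vanishingForms_empty : f ∈ vanishingForms d ∅ ↔ f.IsHomogeneous d := by
  simp [mem_vanishingForms]

lemma mul_mem_degreeLT_iff {R : Type*} [CommRing R] {h g : Polynomial R} (hh : h.Monic) {n : ℕ} :
    h * g ∈ Polynomial.degreeLT R n ↔ g ∈ Polynomial.degreeLT R (n - h.natDegree) := by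
  rcases eq_or_ne g 0 with rfl | hg
  · simp
  have hhg : h * g ≠ 0 := fun h0 ↦ hg (hh.mul_right_eq_zero_iff.1 h0)
  rw [Polynomial.mem_degreeLT, Polynomial.mem_degreeLT,
    ← Polynomial.natDegree_lt_iff_degree_lt hg, ← Polynomial.natDegree_lt_iff_degree_lt hhg,
    hh.natDegree_mul' hg]
  lia

lemma homogenize_mem_vanishingForms_iff {G : Polynomial Fq} (hG : G.natDegree ≤ d) :
    G.homogenize d ∈ vanishingForms d D ↔
      ∏ P ∈ D, P.pol ∣ G ∧ (none ∈ D → G.coeff d = 0) := by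
  rw [mem_vanishingForms, and_iff_right (Polynomial.isHomogeneous_homogenize G)]
  constructor
  · refine fun h ↦ ⟨Finset.prod_dvd_of_coprime
      (P1Pt.pairwise_isCoprime_pol.set_pairwise _) fun P hP ↦ ?_, fun hD ↦ ?_⟩
    · cases P with
      | none => exact one_dvd _
      | some p => exact (resEval_some_homogenize_eq_zero_iff p hG).1 (h _ hP)
    · exact (resEval_none_homogenize d G).symm.trans (h none hD)
  · rintro ⟨hdvd, hcoeff⟩ P hP
    cases P with
    | none => exact (resEval_none_homogenize d G).trans (hcoeff hP)
    | some p =>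
      exact (resEval_some_homogenize_eq_zero_iff p hG).2 ((Finset.dvd_prod_of_mem _ hP).trans hdvd)

lemma exists_homogenize_eq (hf : f.IsHomogeneous d) :
    ∃ G : Polynomial Fq, G.natDegree ≤ d ∧ G.homogenize d = f :=
  have hdeg (i : Fin 2) : (![Polynomial.X, 1] i : Polynomial Fq).natDegree ≤ 1 := by
    fin_cases i <;> simp
  ⟨_, (MvPolynomial.aeval_natDegree_le f hf.totalDegree_le _ hdeg).trans_eq (mul_one d),
    Polynomial.homogenize_eq_of_isHomogeneous hf rfl⟩

lemma mem_degreeLT_sub_degD_iff {g : Polynomial Fq} :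
    g ∈ Polynomial.degreeLT Fq (d + 1 - degD D) ↔
      ((∏ P ∈ D, P.pol) * g).natDegree ≤ d ∧
        (none ∈ D → ((∏ P ∈ D, P.pol) * g).coeff d = 0) := by
  have hmonic : (∏ P ∈ D, P.pol).Monic := Polynomial.monic_prod_of_monic _ _ fun P _ ↦ P.monic_pol
  have hdegD : d + 1 - degD D =
      d + 1 - (if none ∈ D then 1 else 0) - (∏ P ∈ D, P.pol).natDegree := by
    rw [degD_eq_natDegree_prod_pol_add]
    lia
  rw [hdegD, ← mul_mem_degreeLT_iff hmonic]
  split_ifs with hD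
  · simp only [hD, true_implies, Nat.add_sub_cancel, Polynomial.mem_degreeLT,
      Polynomial.degree_lt_iff_coeff_zero, Polynomial.natDegree_le_iff_coeff_eq_zero]
    exact ⟨fun h ↦ ⟨fun N hN ↦ h N hN.le, h d le_rfl⟩, fun h N hN ↦
      hN.eq_or_lt.elim (fun hd ↦ hd ▸ h.2) (h.1 N)⟩
  · simp [hD, Polynomial.degreeLT_succ_eq_degreeLE, Polynomial.mem_degreeLE,
      Polynomial.natDegree_le_iff_degree_le]

lemma mem_vanishingForms_iff_exists :
    f ∈ vanishingForms d D ↔ ∃ g ∈ Polynomial.degreeLT Fq (d + 1 - degD D),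
      ((∏ P ∈ D, P.pol) * g).homogenize d = f := by
  simp only [mem_degreeLT_sub_degD_iff]
  constructor
  · intro hf
    obtain ⟨G, hG, rfl⟩ := exists_homogenize_eq (mem_vanishingForms.1 hf).1
    obtain ⟨⟨g, rfl⟩, hcoeff⟩ := (homogenize_mem_vanishingForms_iff hG).1 hf
    exact ⟨g, ⟨hG, hcoeff⟩, rfl⟩
  · rintro ⟨g, ⟨hG, hcoeff⟩, rfl⟩
    exact (homogenize_mem_vanishingForms_iff hG).2 ⟨dvd_mul_right _ _, hcoeff⟩

lemma nonempty_linearEquiv_vanishingForms (d : ℕ) (D : Finset (P1Pt Fq)) :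
    Nonempty (Polynomial.degreeLT Fq (d + 1 - degD D) ≃ₗ[Fq] vanishingForms d D) := by
  let φ : Polynomial Fq →ₗ[Fq] MvPolynomial (Fin 2) Fq :=
    Polynomial.homogenizeLM d ∘ₗ LinearMap.mulLeft Fq (∏ P ∈ D, P.pol)
  have hmem (g : Polynomial.degreeLT Fq (d + 1 - degD D)) : φ g ∈ vanishingForms d D :=
    mem_vanishingForms_iff_exists.2 ⟨g, g.2, rfl⟩
  refine ⟨.ofBijective ((φ.domRestrict _).codRestrict _ hmem) ⟨?_, ?_⟩⟩
  · refine (injective_iff_map_eq_zero _).2 fun ⟨g, hg⟩ h0 ↦ Subtype.ext ?_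
    have hmul : (∏ P ∈ D, P.pol) * g = 0 := Polynomial.eq_zero_of_homogenize_eq_zero
      (mem_degreeLT_sub_degD_iff.1 hg).1 (congrArg Subtype.val h0)
    exact (Polynomial.monic_prod_of_monic _ _ fun P _ ↦ P.monic_pol).mul_right_eq_zero_iff.1 hmul
  · rintro ⟨f, hf⟩
    obtain ⟨g, hg, rfl⟩ := mem_vanishingForms_iff_exists.1 hf
    exact ⟨⟨g, hg⟩, rfl⟩

instance (d : ℕ) (D : Finset (P1Pt Fq)) : Module.Finite Fq (vanishingForms d D) :=
  .equiv (nonempty_linearEquiv_vanishingForms d D).some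

lemma finrank_vanishingForms (d : ℕ) (D : Finset (P1Pt Fq)) :
    Module.finrank Fq (vanishingForms d D) = d + 1 - degD D := by
  rw [← (nonempty_linearEquiv_vanishingForms d D).some.finrank_eq,
    (Polynomial.degreeLTEquiv Fq _).finrank_eq, Module.finrank_fin_fun]

lemma natCard_vanishingForms [Finite Fq] (d : ℕ) (D : Finset (P1Pt Fq)) :
    Nat.card (vanishingForms d D) = Nat.card Fq ^ (d + 1 - degD D) := by
  rw [Module.natCard_eq_pow_finrank (K := Fq), finrank_vanishingForms]

/-- Restriction of the forms of degree `d` on `P¹` to the divisor `D`. -/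
def evalDivisor (d : ℕ) (D : Finset (P1Pt Fq)) :
    vanishingForms d (∅ : Finset (P1Pt Fq)) →ₗ[Fq] ∀ P : D, P1Pt.Res (P : P1Pt Fq) :=
  (LinearMap.pi fun P : D ↦ (MvPolynomial.aeval (P1Pt.coords P.1)).toLinearMap).domRestrict _

lemma finrank_ker_evalDivisor (d : ℕ) (D : Finset (P1Pt Fq)) :
    Module.finrank Fq (LinearMap.ker (evalDivisor d D)) = d + 1 - degD D := by
  have hker : (LinearMap.ker (evalDivisor d D)).map (Submodule.subtype _) =
      vanishingForms d D := by
    ext f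
    simp [mem_vanishingForms, evalDivisor, resEval, funext_iff, and_comm]
  rw [← Submodule.finrank_map_subtype_eq, hker, finrank_vanishingForms]

lemma evalDivisor_surjective (hD : degD D ≤ d + 1) : Function.Surjective (evalDivisor d D) := by
  have hrank := (evalDivisor d D).finrank_range_add_finrank_ker
  have hpi : Module.finrank Fq (∀ P : D, P1Pt.Res (P : P1Pt Fq)) = degD D := by
    rw [Module.finrank_pi_fintype]
    simp only [P1Pt.finrank_res, degD, Finset.sum_coe_sort D P1Pt.deg]
  rw [finrank_ker_evalDivisor, finrank_vanishingForms, degD_empty] at hrank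
  exact LinearMap.range_eq_top.1 (Submodule.eq_top_of_finrank_eq (by lia))

end Forms

section LeadingCoefficientSum

lemma sum_comp_of_surjective {G H M : Type*} [AddGroup G] [AddGroup H] [Fintype G] [Fintype H]
    [AddCommMonoid M] {φ : G →+ H} (hφ : Function.Surjective φ) (F : H → M) :
    ∑ g, F (φ g) = Nat.card φ.ker • ∑ h, F h := by
  have hfiber (h : H) : (Finset.univ.filter fun g ↦ φ g = h).card = Nat.card φ.ker := by
    obtain ⟨g, rfl⟩ := hφ h
    rw [← Nat.card_congr (φ.fiberEquivKer g), Nat.card_eq_card_toFinset]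
    congr 1
    ext
    simp
  rw [← Finset.sum_fiberwise Finset.univ φ, Finset.smul_sum]
  refine Finset.sum_congr rfl fun h _ ↦ ?_
  rw [Finset.sum_congr rfl fun g hg ↦ congrArg F (Finset.mem_filter.1 hg).2, Finset.sum_const,
    hfiber]

/-- The coefficients of the restriction of a section to the fiber over `P`. -/
def restrictFiber {n : ℕ} (P : P1Pt Fq) (B : Fin n → MvPolynomial (Fin 2) Fq) :
    Fin n → P1Pt.Res P :=
  fun i ↦ resEval P (B i)

lemma rP_eq_projRootCount (P : P1Pt Fq) (s : Fin 4 → MvPolynomial (Fin 2) Fq) :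
    rP P s = projRootCount (restrictFiber P s) :=
  rfl

lemma aD_cons_eq_prod {d : ℕ} {D : Finset (P1Pt Fq)} (t : Fin 3 → MvPolynomial (Fin 2) Fq)
    (a : vanishingForms d (∅ : Finset (P1Pt Fq))) :
    aD D (Fin.cons a.1 t) = ∏ P : D, ((projRootCount
      (Fin.cons (evalDivisor d D a P) (restrictFiber P.1 t) : Fin 4 → _) : ℤ) - 1) := by
  rw [aD, ← Finset.prod_coe_sort]
  refine Finset.prod_congr rfl fun P _ ↦ ?_
  rw [rP_eq_projRootCount]
  congr 3
  ext i
  cases i using Fin.cases <;> rfl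

variable [Finite Fq]

instance (d : ℕ) (D : Finset (P1Pt Fq)) : Finite (vanishingForms d D) :=
  Module.finite_of_finite Fq

instance (d : ℕ) (D : Finset (P1Pt Fq)) : Fintype (vanishingForms d D) := Fintype.ofFinite _

/-- The values at the points of `D` of a uniformly random form of degree `d` are independent and
uniformly distributed. -/
lemma sum_prod_evalDivisor {d : ℕ} {D : Finset (P1Pt Fq)} (hD : degD D ≤ d + 1)
    {M : Type*} [CommSemiring M] (F : ∀ P : D, P1Pt.Res (P : P1Pt Fq) → M) :
    ∑ a : vanishingForms d (∅ : Finset (P1Pt Fq)), ∏ P : D, F P (evalDivisor d D a P) =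
      Nat.card Fq ^ (d + 1 - degD D) * ∏ P : D, ∑ x, F P x := by
  have hker : Nat.card (LinearMap.ker (evalDivisor d D)) = Nat.card Fq ^ (d + 1 - degD D) := by
    rw [Module.natCard_eq_pow_finrank (K := Fq), finrank_ker_evalDivisor]
  rw [Fintype.prod_sum, ← Nat.cast_pow, ← hker, ← nsmul_eq_mul]
  exact sum_comp_of_surjective (φ := (evalDivisor d D).toAddMonoidHom)
    (evalDivisor_surjective hD) fun x ↦ ∏ P : D, F P (x P)

lemma sum_aD_cons {d : ℕ} {D : Finset (P1Pt Fq)} (hD : degD D ≤ d + 1)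
    (t : Fin 3 → MvPolynomial (Fin 2) Fq) :
    ∑ a : vanishingForms d (∅ : Finset (P1Pt Fq)), aD D (Fin.cons a.1 t) =
      if ∀ P ∈ D, resEval P (t 2) = 0 then (Nat.card Fq : ℤ) ^ (d + 1) else 0 := by
  have hlocal : ∏ P : D, ∑ x, ((projRootCount
      (Fin.cons x (restrictFiber P.1 t) : Fin 4 → P1Pt.Res (P : P1Pt Fq)) : ℤ) - 1) =
        if ∀ P ∈ D, resEval P (t 2) = 0 then (Nat.card Fq : ℤ) ^ degD D else 0 := by
    simp only [sum_projRootCount_cons_sub_one]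
    rw [Finset.prod_coe_sort D fun P : P1Pt Fq ↦
        if restrictFiber P t 2 = 0 then (Nat.card (P1Pt.Res P) : ℤ) else 0,
      Finset.prod_ite_zero, ← Nat.cast_prod, prod_natCard_res, Nat.cast_pow]
    rfl
  simp only [aD_cons_eq_prod]
  rw [sum_prod_evalDivisor hD fun P x ↦ (projRootCount
      (Fin.cons x (restrictFiber P.1 t) : Fin 4 → P1Pt.Res (P : P1Pt Fq)) : ℤ) - 1,
    hlocal, mul_ite, mul_zero, ← pow_add, Nat.sub_add_cancel hD]

end LeadingCoefficientSum

section Sections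

lemma isHomOfDeg_sub_iff {m k ℓ : ℕ} (h : m * k ≤ ℓ) {p : MvPolynomial (Fin 2) Fq} :
    IsHomOfDeg p ((ℓ : ℤ) - m * k) ↔ p.IsHomogeneous (ℓ - m * k) := by
  rw [← Nat.cast_mul, ← Nat.cast_sub h, IsHomOfDeg, Int.toNat_natCast]
  exact and_iff_left fun hneg ↦ absurd hneg (Int.natCast_nonneg _).not_gt

variable [Finite Fq]

/-- The finset of binary forms of degree `d` vanishing on `D`. -/
def formFinset (d : ℕ) (D : Finset (P1Pt Fq)) : Finset (MvPolynomial (Fin 2) Fq) :=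
  Finset.univ.map (Function.Embedding.subtype (· ∈ vanishingForms d D))

lemma mem_formFinset {d : ℕ} {D : Finset (P1Pt Fq)} {f : MvPolynomial (Fin 2) Fq} :
    f ∈ formFinset d D ↔ f ∈ vanishingForms d D := by
  simp [formFinset]

lemma card_formFinset (d : ℕ) (D : Finset (P1Pt Fq)) :
    (formFinset d D).card = Nat.card Fq ^ (d + 1 - degD D) := by
  rw [formFinset, Finset.card_map, Finset.card_univ, ← Nat.card_eq_fintype_card,
    natCard_vanishingForms]

/-- The sections of `O(m, ℓ)` that are not divisible by `x`, that is, whose coefficient of `y ^ m`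
is nonzero, and that vanish identically on the fibers over `D`. They are those of `O(m, ℓ)` only
if `m * k ≤ ℓ`: otherwise `ℓ - i * k` truncates to `0` and admits constants as coefficients. -/
def xFreeSections (m ℓ k : ℕ) (D : Finset (P1Pt Fq)) :
    Finset (Fin (m + 1) → MvPolynomial (Fin 2) Fq) :=
  {s ∈ Fintype.piFinset fun i : Fin (m + 1) ↦ formFinset (ℓ - i * k) D | s (Fin.last m) ≠ 0}

variable {m ℓ k : ℕ} {D : Finset (P1Pt Fq)}

lemma mem_xFreeSections {s : Fin (m + 1) → MvPolynomial (Fin 2) Fq} :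
    s ∈ xFreeSections m ℓ k D ↔
      (∀ i : Fin (m + 1), s i ∈ vanishingForms (ℓ - i * k) D) ∧ s (Fin.last m) ≠ 0 := by
  simp [xFreeSections, mem_formFinset]

lemma mem_xFreeSections_empty (h : m * k ≤ ℓ) {s : Fin (m + 1) → MvPolynomial (Fin 2) Fq} :
    s ∈ xFreeSections m ℓ k ∅ ↔ s ∈ SecSet m ℓ k ∧ s (Fin.last m) ≠ 0 := by
  have hi (i : Fin (m + 1)) : (i : ℕ) * k ≤ ℓ := (Nat.mul_le_mul_right k i.is_le).trans h
  simp only [mem_xFreeSections, mem_vanishingForms_empty, SecSet, Set.mem_ofPred_eq,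
    isHomOfDeg_sub_iff (hi _)]

lemma sum_xFreeSections_succ {M : Type*} [AddCommMonoid M]
    (f : (Fin (m + 2) → MvPolynomial (Fin 2) Fq) → M) :
    ∑ s ∈ xFreeSections (m + 1) ℓ k D, f s =
      ∑ t ∈ xFreeSections m (ℓ - k) k D, ∑ a ∈ formFinset ℓ D, f (Fin.cons a t) := by
  have htail : (Fin.tail fun i : Fin (m + 2) ↦ formFinset (ℓ - i * k) D) =
      fun i : Fin (m + 1) ↦ formFinset (ℓ - k - i * k) D := by
    ext i : 1
    simp only [Fin.tail, Fin.val_succ, add_mul, one_mul, Nat.sub_sub, add_comm]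
  have hmap := Finset.filter_piFinset_eq_map_consEquiv
    (fun i : Fin (m + 2) ↦ formFinset (ℓ - i * k) D)
    fun t : Fin (m + 1) → MvPolynomial (Fin 2) Fq ↦ t (Fin.last m) ≠ 0
  rw [htail] at hmap
  rw [← Finset.sum_product_right', xFreeSections, xFreeSections]
  refine (congrArg (fun S ↦ ∑ s ∈ S, f s) hmap).trans ?_
  rw [Finset.sum_map]
  simp only [Nat.zero_mul, Nat.sub_zero, Fin.val_zero, Equiv.coe_toEmbedding]
  rfl

lemma sum_formFinset_empty {M : Type*} [AddCommMonoid M] (d : ℕ)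
    (f : MvPolynomial (Fin 2) Fq → M) :
    ∑ a ∈ formFinset d ∅, f a = ∑ a : vanishingForms d (∅ : Finset (P1Pt Fq)), f a.1 :=
  Finset.sum_map _ _ _

lemma card_xFreeSections_two_last_vanishing (m k : ℕ) (D : Finset (P1Pt Fq)) :
    ({t ∈ xFreeSections 2 m k (∅ : Finset (P1Pt Fq)) | ∀ P ∈ D, resEval P (t 2) = 0}.card : ℤ) =
      (Nat.card Fq : ℤ) ^ (m + 1) * (Nat.card Fq : ℤ) ^ (m - k + 1) *
        ((Nat.card Fq : ℤ) ^ (m - 2 * k + 1 - degD D) - 1) := by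
  have hpi : {t ∈ xFreeSections 2 m k (∅ : Finset (P1Pt Fq)) | ∀ P ∈ D, resEval P (t 2) = 0} =
      Fintype.piFinset ![formFinset m ∅, formFinset (m - k) ∅,
        (formFinset (m - 2 * k) D).erase 0] := by
    ext t
    have hfin (p : Fin 3 → Prop) : (∀ i, p i) ↔ p 0 ∧ p 1 ∧ p 2 := by
      simp [Fin.forall_fin_succ]
    rw [Finset.mem_filter, mem_xFreeSections, Fintype.mem_piFinset, hfin, hfin]
    change _ ↔ t 0 ∈ formFinset m ∅ ∧ t 1 ∈ formFinset (m - k) ∅ ∧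
      t 2 ∈ (formFinset (m - 2 * k) D).erase 0
    simp only [mem_formFinset, Finset.mem_erase, mem_vanishingForms, Fin.val_zero,
      Fin.val_one, Fin.val_two, zero_mul, one_mul, Nat.sub_zero]
    tauto
  have hone : 1 ≤ Nat.card Fq ^ (m - 2 * k + 1 - degD D) := Nat.one_le_pow _ _ Nat.card_pos
  rw [hpi, Fintype.card_piFinset, Fin.prod_univ_three]
  simp [card_formFinset, Finset.card_erase_of_mem, mem_formFinset, Nat.cast_sub hone]

lemma sum_aD_xFreeSections (hk : 3 * k ≤ ℓ) (hD : degD D ≤ ℓ) :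
    ∑ s ∈ xFreeSections 3 ℓ k ∅, aD D s =
      if 3 * k + degD D ≤ ℓ then
        (Nat.card Fq : ℤ) ^ (4 * ℓ + 4 - 6 * k - degD D) -
          (Nat.card Fq : ℤ) ^ (3 * ℓ + 3 - 3 * k)
      else 0 := by
  rw [sum_xFreeSections_succ]
  simp only [sum_formFinset_empty, sum_aD_cons (hD.trans ℓ.le_succ)]
  rw [← Finset.sum_filter, Finset.sum_const, nsmul_eq_mul,
    card_xFreeSections_two_last_vanishing]
  split_ifs with h
  · rw [mul_sub_one, sub_mul]
    simp only [← pow_add]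
    congr 2 <;> lia
  · have : ℓ - k - 2 * k + 1 - degD D = 0 := by lia
    simp [this]

end Sections

section ErrorTerm

lemma restrictFiber_quadMulLin (P : P1Pt Fq) (B : Fin 3 → MvPolynomial (Fin 2) Fq)
    (C : Fin 2 → MvPolynomial (Fin 2) Fq) :
    restrictFiber P (quadMulLin B C) = quadMulLin (restrictFiber P B) (restrictFiber P C) := by
  ext i
  fin_cases i <;> simp [restrictFiber, quadMulLin, resEval]

lemma abs_aD_quadMulLin_le (D : Finset (P1Pt Fq)) (B : Fin 3 → MvPolynomial (Fin 2) Fq)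
    (C : Fin 2 → MvPolynomial (Fin 2) Fq) :
    |(aD D (quadMulLin B C) : ℚ)| ≤
      2 ^ D.card * ((∏ P ∈ D, zeroWeight (restrictFiber P B)) *
        ∏ P ∈ D, zeroWeight (restrictFiber P C)) := by
  rw [aD, Int.cast_prod, Finset.abs_prod, ← Finset.prod_const, ← mul_assoc,
    ← Finset.prod_mul_distrib, ← Finset.prod_mul_distrib]
  refine Finset.prod_le_prod (fun P _ ↦ abs_nonneg _) fun P _ ↦ ?_
  rw [rP_eq_projRootCount, restrictFiber_quadMulLin, Int.cast_sub, Int.cast_natCast, Int.cast_one]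
  exact abs_projRootCount_quadMulLin_sub_one_le _ _

variable [Finite Fq] {m ℓ k : ℕ}

lemma xFreeSections_eq_empty {D : Finset (P1Pt Fq)} (hD : ℓ - m * k < degD D) :
    xFreeSections m ℓ k D = ∅ := by
  have hcard : Nat.card (vanishingForms (ℓ - m * k) D) = 1 := by
    rw [natCard_vanishingForms, Nat.sub_eq_zero_of_le hD, pow_zero]
  have hsub : Subsingleton (vanishingForms (ℓ - m * k) D) := (Nat.card_eq_one_iff_unique.1 hcard).1
  refine Finset.eq_empty_of_forall_notMem fun s hs ↦ ?_
  obtain ⟨hmem, hne⟩ := mem_xFreeSections.1 hs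
  exact hne (congrArg Subtype.val (hsub.elim ⟨_, hmem (Fin.last m)⟩ 0))

lemma card_xFreeSections_mul_pow_le (D : Finset (P1Pt Fq)) :
    (xFreeSections m ℓ k D).card * (Nat.card Fq ^ degD D) ^ (m + 1) ≤
      ∏ i : Fin (m + 1), Nat.card Fq ^ (ℓ - i * k + 1) := by
  rcases lt_or_ge (ℓ - m * k) (degD D) with hD | hD
  · simp [xFreeSections_eq_empty hD]
  have hdeg (i : Fin (m + 1)) : degD D ≤ ℓ - i * k + 1 := by
    have := Nat.sub_le_sub_left (Nat.mul_le_mul_right k i.is_le) ℓ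
    lia
  calc (xFreeSections m ℓ k D).card * (Nat.card Fq ^ degD D) ^ (m + 1)
      ≤ (∏ i : Fin (m + 1), Nat.card Fq ^ (ℓ - i * k + 1 - degD D)) *
          (Nat.card Fq ^ degD D) ^ (m + 1) := by
        gcongr
        refine (Finset.card_filter_le _ _).trans_eq ?_
        simp only [Fintype.card_piFinset, card_formFinset]
    _ = ∏ i : Fin (m + 1), Nat.card Fq ^ (ℓ - i * k + 1) := by
        rw [← Fin.prod_const, ← Finset.prod_mul_distrib]
        exact Finset.prod_congr rfl fun i _ ↦ by rw [← pow_add, Nat.sub_add_cancel (hdeg i)]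

lemma filter_xFreeSections_empty (E : Finset (P1Pt Fq)) :
    {B ∈ xFreeSections m ℓ k (∅ : Finset (P1Pt Fq)) | ∀ P ∈ E, restrictFiber P B = 0} =
      xFreeSections m ℓ k E := by
  ext B
  simp only [Finset.mem_filter, mem_xFreeSections, mem_vanishingForms, restrictFiber,
    funext_iff, Pi.zero_apply, forall_and, Finset.notMem_empty, IsEmpty.forall_iff, implies_true]
  tauto

lemma card_xFreeSections_mul_prod_le (E : Finset (P1Pt Fq)) :
    ((xFreeSections m ℓ k E).card : ℚ) * ∏ P ∈ E, (Nat.card (P1Pt.Res P) : ℚ) / 2 ≤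
      (∏ i : Fin (m + 1), (Nat.card Fq : ℚ) ^ (ℓ - i * k + 1)) *
        ∏ P ∈ E, ((Nat.card (P1Pt.Res P) : ℚ) ^ m)⁻¹ / 2 := by
  have hpos (P : P1Pt Fq) : (0 : ℚ) < Nat.card (P1Pt.Res P) := by
    exact_mod_cast Nat.card_pos
  have hcard : ((xFreeSections m ℓ k E).card : ℚ) * ∏ P ∈ E, (Nat.card (P1Pt.Res P) : ℚ) ^ (m + 1) ≤
      ∏ i : Fin (m + 1), (Nat.card Fq : ℚ) ^ (ℓ - i * k + 1) := by
    rw [Finset.prod_pow]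
    exact_mod_cast (prod_natCard_res E).symm ▸ card_xFreeSections_mul_pow_le E
  calc ((xFreeSections m ℓ k E).card : ℚ) * ∏ P ∈ E, (Nat.card (P1Pt.Res P) : ℚ) / 2
      = ((xFreeSections m ℓ k E).card : ℚ) * (∏ P ∈ E, (Nat.card (P1Pt.Res P) : ℚ) ^ (m + 1)) *
          ∏ P ∈ E, ((Nat.card (P1Pt.Res P) : ℚ) ^ m)⁻¹ / 2 := by
        rw [mul_assoc, ← Finset.prod_mul_distrib]
        congr 1
        refine Finset.prod_congr rfl fun P _ ↦ ?_
        have := (hpos P).ne'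
        rw [pow_succ]
        field_simp
    _ ≤ _ := by gcongr

lemma sum_prod_zeroWeight_le (D : Finset (P1Pt Fq)) :
    ∑ B ∈ xFreeSections m ℓ k ∅, ∏ P ∈ D, zeroWeight (restrictFiber P B) ≤
      (∏ i : Fin (m + 1), (Nat.card Fq : ℚ) ^ (ℓ - i * k + 1)) *
        ∏ P ∈ D, (1 + ((Nat.card (P1Pt.Res P) : ℚ) ^ m)⁻¹ / 2) := by
  simp only [zeroWeight, Finset.prod_one_add]
  rw [Finset.sum_comm, Finset.mul_sum]
  refine Finset.sum_le_sum fun E _ ↦ ?_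
  simp_rw [Finset.prod_ite_zero]
  rw [← Finset.sum_filter, filter_xFreeSections_empty, Finset.sum_const, nsmul_eq_mul]
  exact card_xFreeSections_mul_prod_le E

lemma two_mul_localFactor_le_three {x : ℚ} (hx : 2 ≤ x) :
    2 * (1 + (x ^ 2)⁻¹ / 2) * (1 + (x ^ 1)⁻¹ / 2) ≤ 3 := by
  have h2 : (x ^ 2)⁻¹ ≤ (2 ^ 2)⁻¹ := by gcongr
  have h1 : (x ^ 1)⁻¹ ≤ (2 ^ 1)⁻¹ := by gcongr
  have h0 : 0 ≤ (x ^ 1)⁻¹ := by positivity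
  nlinarith

lemma sum_abs_aD_quadMulLin_le (b c k : ℕ) (D : Finset (P1Pt Fq)) :
    ∑ B ∈ xFreeSections 2 b k ∅, ∑ C ∈ xFreeSections 1 c k ∅, |(aD D (quadMulLin B C) : ℚ)| ≤
      (∏ i : Fin 3, (Nat.card Fq : ℚ) ^ (b - i * k + 1)) *
        (∏ i : Fin 2, (Nat.card Fq : ℚ) ^ (c - i * k + 1)) * 3 ^ D.card := by
  have hres (P : P1Pt Fq) : (2 : ℚ) ≤ Nat.card (P1Pt.Res P) := by
    exact_mod_cast (Finite.one_lt_card (α := Fq)).trans_le P.natCard_le_natCard_res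
  calc ∑ B ∈ xFreeSections 2 b k ∅, ∑ C ∈ xFreeSections 1 c k ∅, |(aD D (quadMulLin B C) : ℚ)|
      ≤ ∑ B ∈ xFreeSections 2 b k ∅, ∑ C ∈ xFreeSections 1 c k ∅,
          2 ^ D.card * ((∏ P ∈ D, zeroWeight (restrictFiber P B)) *
            ∏ P ∈ D, zeroWeight (restrictFiber P C)) := by
        gcongr
        exact abs_aD_quadMulLin_le ..
    _ = 2 ^ D.card * ((∑ B ∈ xFreeSections 2 b k ∅, ∏ P ∈ D, zeroWeight (restrictFiber P B)) *
          ∑ C ∈ xFreeSections 1 c k ∅, ∏ P ∈ D, zeroWeight (restrictFiber P C)) := by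
        rw [Finset.sum_mul_sum]
        simp only [Finset.mul_sum]
    _ ≤ 2 ^ D.card * (((∏ i : Fin 3, (Nat.card Fq : ℚ) ^ (b - i * k + 1)) *
            ∏ P ∈ D, (1 + ((Nat.card (P1Pt.Res P) : ℚ) ^ 2)⁻¹ / 2)) *
          ((∏ i : Fin 2, (Nat.card Fq : ℚ) ^ (c - i * k + 1)) *
            ∏ P ∈ D, (1 + ((Nat.card (P1Pt.Res P) : ℚ) ^ 1)⁻¹ / 2))) := by
        gcongr
        · exact Finset.sum_nonneg fun C _ ↦ Finset.prod_nonneg fun P _ ↦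
            zero_le_one.trans (one_le_zeroWeight _)
        · exact sum_prod_zeroWeight_le D
        · exact sum_prod_zeroWeight_le D
    _ = (∏ i : Fin 3, (Nat.card Fq : ℚ) ^ (b - i * k + 1)) *
          (∏ i : Fin 2, (Nat.card Fq : ℚ) ^ (c - i * k + 1)) *
            ∏ P ∈ D, 2 * (1 + ((Nat.card (P1Pt.Res P) : ℚ) ^ 2)⁻¹ / 2) *
              (1 + ((Nat.card (P1Pt.Res P) : ℚ) ^ 1)⁻¹ / 2) := by
        rw [Finset.prod_mul_distrib, Finset.prod_mul_distrib, Finset.prod_const]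
        ring
    _ ≤ _ := by
        rw [← Finset.prod_const]
        gcongr with P
        exact two_mul_localFactor_le_three (hres P)

end ErrorTerm

section Reducible

variable {ℓ k : ℕ}

lemma horizRed_of_last_eq_zero {s : Fin 4 → MvPolynomial (Fin 2) Fq} (hs : s ∈ SecSet 3 ℓ k)
    (h3 : s 3 = 0) : HorizRed k s := by
  refine or_iff_not_imp_left.2 fun h0 ↦ ⟨ℓ, 0, Fin.init s, ![1, 0], fun hB ↦ h0 ?_,
    fun hC ↦ one_ne_zero (congrFun hC 0), fun j ↦ hs j.castSucc, ?_, ?_⟩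
  · exact funext (Fin.lastCases h3 (congrFun hB))
  · simp [Fin.forall_fin_two, IsHomOfDeg, MvPolynomial.isHomogeneous_one,
      MvPolynomial.isHomogeneous_zero]
  · simp [Fin.init, h3]

variable [Finite Fq]

lemma setOf_not_horizRed_eq (hk : 3 * k ≤ ℓ) :
    {s ∈ SecSet (Fq := Fq) 3 ℓ k | ¬ HorizRed k s} =
      ({s ∈ xFreeSections 3 ℓ k ∅ | ¬ HorizRed k s} :
        Finset (Fin 4 → MvPolynomial (Fin 2) Fq)) := by
  ext s
  simp only [Set.mem_ofPred_eq, Finset.coe_filter, mem_xFreeSections_empty hk]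
  exact ⟨fun ⟨hs, hirr⟩ ↦ ⟨⟨hs, fun h3 ↦ hirr (horizRed_of_last_eq_zero hs h3)⟩, hirr⟩,
    fun ⟨⟨hs, _⟩, hirr⟩ ↦ ⟨hs, hirr⟩⟩

lemma exists_mem_xFreeSections {m : ℕ} {e : ℤ} {B : Fin (m + 1) → MvPolynomial (Fin 2) Fq}
    (hB : ∀ j : Fin (m + 1), IsHomOfDeg (B j) (e - (j : ℕ) * k)) (hlast : B (Fin.last m) ≠ 0) :
    ∃ n : ℕ, m * k ≤ n ∧ B ∈ xFreeSections m n k ∅ := by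
  have he : (m * k : ℤ) ≤ e := by
    by_contra! hlt
    exact hlast ((hB _).2 (by simpa using hlt))
  lift e to ℕ using (by positivity : (0 : ℤ) ≤ m * k).trans he
  have hn : m * k ≤ e := by exact_mod_cast he
  exact ⟨e, hn, (mem_xFreeSections_empty hn).2 ⟨hB, hlast⟩⟩

lemma exists_quadMulLin_eq_of_horizRed (hk : 3 * k ≤ ℓ) {s : Fin 4 → MvPolynomial (Fin 2) Fq}
    (hs : s ∈ xFreeSections 3 ℓ k ∅) (hred : HorizRed k s) :
    ∃ b ∈ Finset.Icc (2 * k) (ℓ - k), ∃ B ∈ xFreeSections 2 b k ∅,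
      ∃ C ∈ xFreeSections 1 (ℓ - b) k ∅, quadMulLin B C = s := by
  obtain ⟨hhom, h3⟩ := mem_xFreeSections.1 hs
  rcases hred with rfl | ⟨b, c, B, C, -, -, hB, hC, e0, e1, e2, e3⟩
  · exact absurd rfl h3
  have hprod : B 2 * C 1 ≠ 0 := e3 ▸ h3
  obtain ⟨b, hb, hB⟩ := exists_mem_xFreeSections hB (left_ne_zero_of_mul hprod)
  obtain ⟨c, hc, hC⟩ := exists_mem_xFreeSections hC (right_ne_zero_of_mul hprod)
  have hB2 := mem_vanishingForms_empty.1 ((mem_xFreeSections.1 hB).1 2)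
  have hC1 := mem_vanishingForms_empty.1 ((mem_xFreeSections.1 hC).1 1)
  have hs3 : (B 2 * C 1).IsHomogeneous (ℓ - 3 * k) :=
    e3 ▸ mem_vanishingForms_empty.1 (hhom 3)
  have hdeg : ℓ - 3 * k = (b - 2 * k) + (c - 1 * k) := hs3.inj_right (hB2.mul hC1) hprod
  obtain rfl : c = ℓ - b := by lia
  refine ⟨b, Finset.mem_Icc.2 ⟨hb, by lia⟩, B, hB, C, hC, ?_⟩
  ext i : 1
  fin_cases i
  exacts [e0.symm, e1.symm, e2.symm, e3.symm]

lemma sum_abs_aD_quadMulLin_le_pow {b : ℕ} (hb : b ∈ Finset.Icc (2 * k) (ℓ - k))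
    (D : Finset (P1Pt Fq)) :
    ∑ B ∈ xFreeSections 2 b k ∅, ∑ C ∈ xFreeSections 1 (ℓ - b) k ∅, |aD D (quadMulLin B C)| ≤
      (Nat.card Fq : ℤ) ^ (2 * ℓ - 4 * k + b + 5) * 3 ^ D.card := by
  have hexp : (∏ i : Fin 3, (Nat.card Fq : ℚ) ^ (b - i * k + 1)) *
      ∏ i : Fin 2, (Nat.card Fq : ℚ) ^ (ℓ - b - i * k + 1) =
        (Nat.card Fq : ℚ) ^ (2 * ℓ - 4 * k + b + 5) := by
    obtain ⟨hb₁, hb₂⟩ := Finset.mem_Icc.1 hb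
    rw [Finset.prod_pow_eq_pow_sum, Finset.prod_pow_eq_pow_sum, ← pow_add, Fin.sum_univ_three,
      Fin.sum_univ_two]
    congr 1
    simp only [Fin.val_zero, Fin.val_one, Fin.val_two]
    lia
  have hle := sum_abs_aD_quadMulLin_le b (ℓ - b) k D
  rw [hexp] at hle
  exact_mod_cast hle

lemma sum_pow_Icc_le {q : ℕ} (hq : 2 ≤ q) (N a b : ℕ) :
    ∑ j ∈ Finset.Icc a b, q ^ (N + j) ≤ q ^ (N + b + 1) := by
  have hgeom := Nat.geomSum_lt (s := Finset.Icc a b) hq fun j hj ↦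
    Nat.lt_succ_of_le (Finset.mem_Icc.1 hj).2
  simp only [pow_add _ N, ← Finset.mul_sum, add_assoc]
  gcongr

lemma sum_abs_aD_horizRed_le (hk : 3 * k ≤ ℓ) (D : Finset (P1Pt Fq)) :
    ∑ s ∈ xFreeSections 3 ℓ k ∅ with HorizRed k s, |aD D s| ≤
      (Nat.card Fq : ℤ) ^ (3 * ℓ - 5 * k + 6) * 3 ^ D.card := by
  let pairs := (Finset.Icc (2 * k) (ℓ - k)).sigma fun b ↦
    xFreeSections (Fq := Fq) 2 b k ∅ ×ˢ xFreeSections (Fq := Fq) 1 (ℓ - b) k ∅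
  have hsub : {s ∈ xFreeSections 3 ℓ k (∅ : Finset (P1Pt Fq)) | HorizRed k s} ⊆
      pairs.image fun x ↦ quadMulLin x.2.1 x.2.2 := by
    intro s hs
    obtain ⟨hmem, hred⟩ := Finset.mem_filter.1 hs
    obtain ⟨b, hb, B, hB, C, hC, rfl⟩ := exists_quadMulLin_eq_of_horizRed hk hmem hred
    exact Finset.mem_image.2 ⟨⟨b, B, C⟩, by simp [pairs, Finset.mem_Icc.1 hb, hB, hC], rfl⟩
  calc ∑ s ∈ xFreeSections 3 ℓ k ∅ with HorizRed k s, |aD D s|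
      ≤ ∑ s ∈ pairs.image fun x ↦ quadMulLin x.2.1 x.2.2, |aD D s| :=
        Finset.sum_le_sum_of_subset_of_nonneg hsub fun _ _ _ ↦ abs_nonneg _
    _ ≤ ∑ x ∈ pairs, |aD D (quadMulLin x.2.1 x.2.2)| :=
        Finset.sum_image_le_of_nonneg fun _ _ ↦ abs_nonneg _
    _ = ∑ b ∈ Finset.Icc (2 * k) (ℓ - k), ∑ B ∈ xFreeSections 2 b k ∅,
          ∑ C ∈ xFreeSections 1 (ℓ - b) k ∅, |aD D (quadMulLin B C)| := by
        rw [Finset.sum_sigma]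
        simp only [Finset.sum_product]
    _ ≤ ∑ b ∈ Finset.Icc (2 * k) (ℓ - k),
          (Nat.card Fq : ℤ) ^ (2 * ℓ - 4 * k + b + 5) * 3 ^ D.card :=
        Finset.sum_le_sum fun b hb ↦ sum_abs_aD_quadMulLin_le_pow hb D
    _ ≤ (Nat.card Fq : ℤ) ^ (3 * ℓ - 5 * k + 6) * 3 ^ D.card := by
        rw [← Finset.sum_mul]
        gcongr
        have hgeom := sum_pow_Icc_le (Finite.one_lt_card (α := Fq)) (2 * ℓ - 4 * k + 5) (2 * k)
          (ℓ - k)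
        rw [show 2 * ℓ - 4 * k + 5 + (ℓ - k) + 1 = 3 * ℓ - 5 * k + 6 by lia] at hgeom
        simp only [add_right_comm _ 5] at hgeom
        exact_mod_cast hgeom

end Reducible

/-- Let `ℓ, k ≥ 0` and `D` a reduced effective divisor on `P¹`
with `ℓ ≥ 3k` and `ℓ ≥ deg D` (the small range).  Then
`Φ^{ir}(ℓ,k,D) = [q^{4ℓ−6k+4−deg D} − q^{3ℓ−3k+3}` if `ℓ−3k ≥ deg D`, else `0]`
`+ O(3^{ω(D)} q^{3ℓ−5k})`, with implied constant depending only on `q`. -/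
theorem statement_17 (Fq : Type) [Field Fq] [Fintype Fq] :
    ∃ K : ℕ, 0 < K ∧
      ∀ (ℓ k : ℕ) (D : Finset (P1Pt Fq)), 3 * k ≤ ℓ → degD D ≤ ℓ →
        |(∑ᶠ s ∈ {s ∈ SecSet 3 ℓ k | ¬ HorizRed k s}, aD D s) -
            (if 3 * k + degD D ≤ ℓ then
              (Fintype.card Fq : ℤ) ^ (4 * ℓ + 4 - 6 * k - degD D) -
                (Fintype.card Fq : ℤ) ^ (3 * ℓ + 3 - 3 * k)
            else 0)| ≤
          (K : ℤ) * 3 ^ D.card * (Fintype.card Fq : ℤ) ^ (3 * ℓ - 5 * k) := by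
  refine ⟨Fintype.card Fq ^ 6, by positivity, fun ℓ k D hk hD ↦ ?_⟩
  simp only [← Nat.card_eq_fintype_card]
  rw [setOf_not_horizRed_eq hk, finsum_mem_coe_finset, ← sum_aD_xFreeSections hk hD,
    ← Finset.sum_filter_add_sum_filter_not (xFreeSections 3 ℓ k ∅) (HorizRed k),
    sub_add_cancel_right, abs_neg]
  calc |∑ s ∈ xFreeSections 3 ℓ k ∅ with HorizRed k s, aD D s|
      ≤ ∑ s ∈ xFreeSections 3 ℓ k ∅ with HorizRed k s, |aD D s| := Finset.abs_sum_le_sum_abs _ _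
    _ ≤ (Nat.card Fq : ℤ) ^ (3 * ℓ - 5 * k + 6) * 3 ^ D.card := sum_abs_aD_horizRed_le hk D
    _ = ((Nat.card Fq ^ 6 : ℕ) : ℤ) * 3 ^ D.card * (Nat.card Fq : ℤ) ^ (3 * ℓ - 5 * k) := by
      push_cast
      ring

end Stmt17
end
end

section
/- Let ℓ, k ≥ 0 be integers and D a reduced effective divisor on P¹ such that ℓ ≥ 3k and ℓ − 2k ≥ (deg D + k)/2. Then Φ^{ir}(ℓ,k,D) = q^{4ℓ−6k+4−deg D} + O(6^{ω(D)} q^{3ℓ−3k}), with implied constant depending only on q. In particular, if additionally deg D > ℓ (the medium range), then Φ^{ir}(ℓ,k,D) = O(6^{ω(D)} q^{3ℓ−3k}). -/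
/-!
Statement 18.  The estimate for the adjusted root-counting sum `Φ^{ir}(ℓ,k,D)` over
the horizontally irreducible binary cubic forms on the Hirzebruch surface `F_k`
over `F_q` under the condition `ℓ − 2k ≥ (deg D + k)/2`, and the resulting
medium-range bound when moreover `deg D > ℓ`.
-/
open scoped Classical

noncomputable section

namespace Stmt18

/-- Closed points of the projective line `P¹` over `F_q`: `none` is the point at
infinity, and `some p` corresponds to the monic irreducible polynomial `p`. -/
abbrev P1Pt (Fq : Type) [Field Fq] : Type :=
  Option {p : Polynomial Fq // p.Monic ∧ Irreducible p}

variable {Fq : Type} [Field Fq]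

/-- The degree of a closed point of `P¹`. -/
def P1Pt.deg : P1Pt Fq → ℕ
  | none => 1
  | some p => p.1.natDegree

/-- The residue field of a closed point of `P¹`. -/
def P1Pt.Res : P1Pt Fq → Type
  | none => Fq
  | some p => AdjoinRoot p.1

instance (P : P1Pt Fq) : CommRing (P1Pt.Res P) :=
  match P with
  | none => inferInstanceAs (CommRing Fq)
  | some p => inferInstanceAs (CommRing (AdjoinRoot p.1))

instance (P : P1Pt Fq) : Algebra Fq (P1Pt.Res P) :=
  match P with
  | none => Algebra.id Fq
  | some p => inferInstanceAs (Algebra Fq (AdjoinRoot p.1))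

/-- The homogeneous coordinates `(t₀ : t₁)` of a closed point of `P¹`, in its residue
field: `(1 : 0)` for the point at infinity, and `(θ : 1)` with `θ` the root of `p`
for the point `some p`. -/
def P1Pt.coords : (P : P1Pt Fq) → Fin 2 → P1Pt.Res P
  | none => ![1, 0]
  | some p => ![AdjoinRoot.root p.1, 1]

/-- Evaluate a polynomial in the homogeneous coordinates `t₀, t₁` of the base `P¹`
at a closed point `P`, in the residue field of `P`. -/
def resEval (P : P1Pt Fq) (A : MvPolynomial (Fin 2) Fq) : P1Pt.Res P :=
  MvPolynomial.aeval (P1Pt.coords P) A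

/-- `r_P(s)`: the number of relative degree one points of the fiber of `F_k → P¹`
over `P` at which the binary cubic form `s = (A₀, A₁, A₂, A₃)` vanishes.  These
points are the `(z : 1)` with `z` in the residue field of `P`, together with `(1 : 0)`. -/
def rP (P : P1Pt Fq) (s : Fin 4 → MvPolynomial (Fin 2) Fq) : ℕ :=
  Nat.card {z : P1Pt.Res P //
      resEval P (s 0) * z ^ 3 + resEval P (s 1) * z ^ 2
        + resEval P (s 2) * z + resEval P (s 3) = 0} +
    (if resEval P (s 0) = 0 then 1 else 0)

/-- The degree of a reduced effective divisor (a finite set of closed points) on `P¹`. -/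
def degD (D : Finset (P1Pt Fq)) : ℕ := ∑ P ∈ D, P1Pt.deg P

/-- `r_D(s) = ∏_{P ∣ D} r_P(s)`. -/
def rD (D : Finset (P1Pt Fq)) (s : Fin 4 → MvPolynomial (Fin 2) Fq) : ℕ :=
  ∏ P ∈ D, rP P s

/-- `a_D(s) = ∏_{P ∣ D} (r_P(s) − 1)`. -/
def aD (D : Finset (P1Pt Fq)) (s : Fin 4 → MvPolynomial (Fin 2) Fq) : ℤ :=
  ∏ P ∈ D, ((rP P s : ℤ) - 1)

/-- `p` is homogeneous of (possibly negative) degree `d`; for `d < 0` this forces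
`p = 0`. -/
def IsHomOfDeg (p : MvPolynomial (Fin 2) Fq) (d : ℤ) : Prop :=
  p.IsHomogeneous d.toNat ∧ (d < 0 → p = 0)

/-- The space of global sections of `O(m, ℓ)` on the Hirzebruch surface `F_k`,
viewed as tuples `(A₀, …, A_m)` of binary forms with `A_i` homogeneous of degree
`ℓ − i·k`. -/
def SecSet (m ℓ k : ℕ) : Set (Fin (m + 1) → MvPolynomial (Fin 2) Fq) :=
  {s | ∀ i : Fin (m + 1), IsHomOfDeg (s i) ((ℓ : ℤ) - (i : ℕ) * k)}

/-- A binary cubic form `s ∈ H⁰(F_k, O(3,ℓ))` is horizontally reducible iff it is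
zero or factors as a product of a nonzero quadratic and a nonzero linear form in
`x, y` with homogeneous polynomial coefficients. -/
def HorizRed (k : ℕ) (s : Fin 4 → MvPolynomial (Fin 2) Fq) : Prop :=
  s = 0 ∨ ∃ (b c : ℤ) (B : Fin 3 → MvPolynomial (Fin 2) Fq)
      (C : Fin 2 → MvPolynomial (Fin 2) Fq),
    B ≠ 0 ∧ C ≠ 0 ∧
    (∀ j : Fin 3, IsHomOfDeg (B j) (b - (j : ℕ) * k)) ∧
    (∀ j : Fin 2, IsHomOfDeg (C j) (c - (j : ℕ) * k)) ∧
    s 0 = B 0 * C 0 ∧ s 1 = B 0 * C 1 + B 1 * C 0 ∧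
    s 2 = B 1 * C 1 + B 2 * C 0 ∧ s 3 = B 2 * C 1

/-!
Expanding `a_D = ∏ (r_P - 1)` over the subdivisors `T` of `D` and writing `∏_{P ∣ T} r_P(s)` as the
number of choices `σ` of a zero of `s` on the fibre over every `P ∣ T`, the sum of `a_D` over all
cubic forms becomes an alternating sum of `q ^ dim V_σ`, where `V_σ` is the space of cubic forms
through the points `σ P`. If `V_σ` does not have the expected dimension, then for dimension reasons
some primitive linear form `C`, of a degree `c ≤ ℓ - 2k`, vanishes at so many of the points that it
divides every cubic form through them, and `dim V_σ` is at most the dimension of the quadratic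
cofactors less the degree of the points off `C`. Since `C` has exactly one zero on each fibre,
summing over `σ` costs a factor `2` per point of `T`, hence `3 ^ ω(D)` in total, and the sum over
`C` and `c` is dominated by a geometric series of size `q ^ (3ℓ - 3k)`.

A horizontally reducible form is a product `B C` of a quadratic and a linear form. Here
`|r_P - 1| ≤ 2` unless `B` or `C` vanishes on the whole fibre over `P`, where the excess
`q ^ deg P` is offset by the proportion `q ^ (-deg P)` of such forms. This leaves a factor
`(2 + 1) (1 + 1) = 6` per point of `D`, and the same geometric series.
-/

/-! ### Closed points of the projective line and forms -/

theorem le_order_of_isHomogeneous {σ R : Type*} [CommSemiring R] {f : MvPolynomial σ R} {n : ℕ}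
    (hf : f.IsHomogeneous n) : (n : ℕ∞) ≤ (f : MvPowerSeries σ R).order :=
  MvPowerSeries.le_order fun d hd ↦ by
    rw [MvPolynomial.coeff_coe]
    exact hf.coeff_eq_zero (by exact_mod_cast hd.ne)

theorem isHomogeneous_totalDegree_of_le_order {σ R : Type*} [CommSemiring R]
    {f : MvPolynomial σ R} (hf : (f.totalDegree : ℕ∞) ≤ (f : MvPowerSeries σ R).order) :
    f.IsHomogeneous f.totalDegree := by
  intro d hd
  have hle : d.degree ≤ f.totalDegree := MvPolynomial.le_totalDegree (by simpa using hd)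
  have hge : (f : MvPowerSeries σ R).order ≤ d.degree :=
    MvPowerSeries.order_le (by rwa [MvPolynomial.coeff_coe])
  have hweight : Finsupp.weight 1 d = d.degree :=
    (DFunLike.congr_fun Finsupp.degree_eq_weight_one d).symm
  rw [hweight]
  exact hle.antisymm (by exact_mod_cast hf.trans hge)

-- Order and total degree are both additive and `order ≤ totalDegree`, with equality exactly for
-- homogeneous polynomials.
theorem isHomogeneous_of_mul {σ R : Type*} [CommRing R] [IsDomain R] {f g : MvPolynomial σ R}
    {n : ℕ} (h : (f * g).IsHomogeneous n) (h0 : f * g ≠ 0) : f.IsHomogeneous f.totalDegree := by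
  have hf0 := left_ne_zero_of_mul h0
  have hg0 := right_ne_zero_of_mul h0
  apply isHomogeneous_totalDegree_of_le_order
  have hdeg : f.totalDegree + g.totalDegree = n := by
    rw [← MvPolynomial.totalDegree_mul_of_isDomain hf0 hg0, h.totalDegree h0]
  have hord : (n : ℕ∞) ≤ (f : MvPowerSeries σ R).order + (g : MvPowerSeries σ R).order := by
    rw [← MvPowerSeries.order_mul, ← MvPolynomial.coe_mul]
    exact le_order_of_isHomogeneous h
  have hg : (g : MvPowerSeries σ R).order ≤ g.totalDegree := by
    obtain ⟨d, hd⟩ := MvPolynomial.ne_zero_iff.1 hg0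
    exact (MvPowerSeries.order_le (by rwa [MvPolynomial.coeff_coe])).trans
      (by exact_mod_cast MvPolynomial.le_totalDegree (MvPolynomial.mem_support_iff.2 hd))
  rw [← hdeg, Nat.cast_add] at hord
  exact (ENat.add_le_add_iff_right (ENat.natCast_ne_top _)).1 (hord.trans (add_le_add_right hg _))

/-- The homogeneous coordinate ring `F_q[t₀, t₁]` of `P¹`. -/
abbrev CoordRing (Fq : Type) [Field Fq] : Type := MvPolynomial (Fin 2) Fq

instance (P : P1Pt Fq) : IsDomain P.Res :=
  match P with
  | none => inferInstanceAs (IsDomain Fq)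
  | some p =>
    have : Fact (Irreducible p.1) := ⟨p.2.2⟩
    inferInstanceAs (IsDomain (AdjoinRoot p.1))

instance (P : P1Pt Fq) : Module.Finite Fq P.Res :=
  match P with
  | none => inferInstanceAs (Module.Finite Fq Fq)
  | some p => (AdjoinRoot.powerBasis p.2.2.ne_zero).finite

instance [Finite Fq] (P : P1Pt Fq) : Finite P.Res := Module.finite_of_finite Fq

theorem P1Pt.finrank_res : ∀ P : P1Pt Fq, Module.finrank Fq P.Res = P.deg
  | none => Module.finrank_self Fq
  | some p =>
    (AdjoinRoot.powerBasis p.2.2.ne_zero).finrank.trans (AdjoinRoot.powerBasis_dim p.2.2.ne_zero)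

/-- Evaluation at a closed point `P`, i.e. `resEval P` as an algebra homomorphism. -/
def evalAt (P : P1Pt Fq) : CoordRing Fq →ₐ[Fq] P.Res := MvPolynomial.aeval P.coords

/-- Dehomogenization `t₀ ↦ X, t₁ ↦ 1`. -/
def dehomogenize : CoordRing Fq →ₐ[Fq] Polynomial Fq := MvPolynomial.aeval ![Polynomial.X, 1]

/-- The irreducible form cutting out the closed point `P`: it is `t₁` at infinity and the
homogenization of `p` at `some p`. -/
def P1Pt.primeForm : P1Pt Fq → CoordRing Fq
  | none => MvPolynomial.X 1
  | some p => p.1.homogenize p.1.natDegree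

theorem homogenize_dehomogenize {f : CoordRing Fq} {n : ℕ} (hf : f.IsHomogeneous n) :
    (dehomogenize f).homogenize n = f :=
  Polynomial.homogenize_eq_of_isHomogeneous hf rfl

theorem dehomogenize_homogenize {f : Polynomial Fq} {n : ℕ} (hf : f.natDegree ≤ n) :
    dehomogenize (f.homogenize n) = f :=
  Polynomial.aeval_homogenize_X_one f hf

theorem natDegree_dehomogenize_le {f : CoordRing Fq} {n : ℕ} (hf : f.IsHomogeneous n) :
    (dehomogenize f).natDegree ≤ n := by
  rw [f.as_sum, map_sum]
  refine Polynomial.natDegree_sum_le_of_forall_le _ _ fun d hd ↦ ?_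
  have hdeg : d 0 + d 1 = n := by
    simpa [Finsupp.weight_apply, Finsupp.sum_fintype] using hf (MvPolynomial.mem_support_iff.1 hd)
  rw [dehomogenize, MvPolynomial.aeval_monomial, ← Polynomial.C_eq_algebraMap]
  calc _ ≤ d 0 := (Polynomial.natDegree_C_mul_le _ _).trans (by simp [Finsupp.prod_fintype])
    _ ≤ n := by omega

theorem evalAt_some (p : {p : Polynomial Fq // p.Monic ∧ Irreducible p}) (f : CoordRing Fq) :
    evalAt (some p) f = AdjoinRoot.mk p.1 (dehomogenize f) := by
  have hcomp : MvPolynomial.aeval ![AdjoinRoot.root p.1, 1] =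
      (AdjoinRoot.mkₐ p.1).comp (dehomogenize (Fq := Fq)) :=
    MvPolynomial.algHom_ext fun i ↦ by fin_cases i <;> simp [dehomogenize]
  exact DFunLike.congr_fun hcomp f

theorem evalAt_some_eq_zero_iff (p : {p : Polynomial Fq // p.Monic ∧ Irreducible p})
    (f : CoordRing Fq) : evalAt (some p) f = 0 ↔ p.1 ∣ dehomogenize f := by
  rw [evalAt_some]
  exact AdjoinRoot.mk_eq_zero

theorem evalAt_none_homogenize (f : Polynomial Fq) (n : ℕ) :
    evalAt none (f.homogenize n) = f.coeff n := by
  change MvPolynomial.aeval (![1, 0] : Fin 2 → Fq) (f.homogenize n) = f.coeff n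
  rw [Polynomial.homogenize, map_sum, Finset.sum_eq_single (n, 0)]
  · simp [MvPolynomial.aeval_monomial, Finsupp.prod_fintype]
  · intro ij hij hne
    have h1 : ij.2 ≠ 0 := fun h1 ↦ hne <| by
      rw [Finset.HasAntidiagonal.mem_antidiagonal, h1, add_zero] at hij
      exact Prod.ext hij h1
    simp [MvPolynomial.aeval_monomial, Finsupp.prod_fintype, h1]
  · simp

theorem dehomogenize_primeForm_some (p : {p : Polynomial Fq // p.Monic ∧ Irreducible p}) :
    dehomogenize (P1Pt.primeForm (some p)) = p.1 :=
  dehomogenize_homogenize le_rfl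

theorem P1Pt.primeForm_ne_zero : ∀ P : P1Pt Fq, P.primeForm ≠ 0
  | none => MvPolynomial.X_ne_zero _
  | some p => fun h ↦ p.2.2.ne_zero <| by rw [← dehomogenize_primeForm_some, h, map_zero]

theorem P1Pt.isHomogeneous_primeForm : ∀ P : P1Pt Fq, P.primeForm.IsHomogeneous P.deg
  | none => MvPolynomial.isHomogeneous_X _ _
  | some _ => Polynomial.isHomogeneous_homogenize _

theorem evalAt_primeForm_self : ∀ P : P1Pt Fq, evalAt P P.primeForm = 0
  | none => (MvPolynomial.aeval_X (![1, 0] : Fin 2 → Fq) 1)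
  | some p => (evalAt_some_eq_zero_iff _ _).2 (dehomogenize_primeForm_some p).symm.dvd

theorem evalAt_primeForm_ne_zero {P Q : P1Pt Fq} (h : P ≠ Q) : evalAt Q P.primeForm ≠ 0 := by
  rcases P with _ | p <;> rcases Q with _ | q
  · exact absurd rfl h
  · rw [Ne, evalAt_some_eq_zero_iff, P1Pt.primeForm]
    simpa [dehomogenize] using q.2.2.not_dvd_one
  · have hlead : p.1.coeff p.1.natDegree = 1 := p.2.1
    rw [P1Pt.primeForm, evalAt_none_homogenize, hlead]
    exact one_ne_zero (α := Fq)
  · rw [Ne, evalAt_some_eq_zero_iff, dehomogenize_primeForm_some]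
    intro hdvd
    have hassoc := q.2.2.associated_of_dvd p.2.2 hdvd
    exact h (congrArg some (Subtype.ext (Polynomial.eq_of_monic_of_associated p.2.1 q.2.1
      hassoc.symm)))

theorem homogenize_dvd_homogenize {p f : Polynomial Fq} {n : ℕ} (hpf : p ∣ f)
    (hn : f.natDegree ≤ n) : p.homogenize p.natDegree ∣ f.homogenize n := by
  have hle : f.homogenize f.natDegree ∣ f.homogenize n := by
    obtain ⟨m, rfl⟩ := Nat.exists_eq_add_of_le hn
    rw [← mul_one f, Polynomial.homogenize_mul _ _ (by simp) (by simp), mul_one]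
    exact dvd_mul_right _ _
  exact (Polynomial.homogenize_dvd hpf).trans hle

theorem evalAt_eq_zero_iff_primeForm_dvd (P : P1Pt Fq) {f : CoordRing Fq} {n : ℕ}
    (hf : f.IsHomogeneous n) : evalAt P f = 0 ↔ P.primeForm ∣ f := by
  refine ⟨fun h ↦ ?_, fun ⟨g, hg⟩ ↦ by rw [hg, map_mul, evalAt_primeForm_self, zero_mul]⟩
  have hdeg := natDegree_dehomogenize_le hf
  rw [← homogenize_dehomogenize hf] at h ⊢
  rcases P with _ | p
  · rw [evalAt_none_homogenize] at h
    rcases hdeg.lt_or_eq with hlt | heq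
    · obtain ⟨m, rfl⟩ : ∃ m, n = 1 + m := ⟨n - 1, by omega⟩
      rw [← one_mul (dehomogenize f), Polynomial.homogenize_mul _ _ (by simp) (by omega),
        Polynomial.homogenize_one, pow_one]
      exact dvd_mul_right _ _
    · have hzero : dehomogenize f = 0 := Polynomial.leadingCoeff_eq_zero.1 (by
        rw [Polynomial.leadingCoeff, heq]; exact h)
      rw [hzero, Polynomial.homogenize_zero]
      exact dvd_zero _
  · rw [evalAt_some_eq_zero_iff, dehomogenize_homogenize hdeg] at h
    exact homogenize_dvd_homogenize h hdeg

theorem finrank_map_add_finrank_inf_ker {K V W : Type*} [DivisionRing K] [AddCommGroup V]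
    [Module K V] [AddCommGroup W] [Module K W] (p : Submodule K V) [Module.Finite K p]
    (f : V →ₗ[K] W) :
    Module.finrank K (p.map f) + Module.finrank K ↥(p ⊓ LinearMap.ker f) = Module.finrank K p := by
  rw [← LinearMap.finrank_range_add_finrank_ker (f.domRestrict p), LinearMap.range_domRestrict,
    LinearMap.ker_domRestrict, ← Submodule.map_comap_subtype p, Submodule.finrank_map_subtype_eq]

/-- The space `H⁰(P¹, O(n))` of binary forms of degree `n`, which is zero for `n < 0`. -/
def forms (Fq : Type) [Field Fq] (n : ℤ) : Submodule Fq (CoordRing Fq) where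
  carrier := {f | IsHomOfDeg f n}
  zero_mem' := ⟨MvPolynomial.isHomogeneous_zero _ _ _, fun _ ↦ rfl⟩
  add_mem' hf hg := ⟨hf.1.add hg.1, fun h ↦ by rw [hf.2 h, hg.2 h, add_zero]⟩
  smul_mem' c f hf := ⟨(MvPolynomial.homogeneousSubmodule (Fin 2) Fq n.toNat).smul_mem c hf.1,
    fun h ↦ by rw [hf.2 h, smul_zero]⟩

section Forms

variable {a b n : ℤ} {f g : CoordRing Fq}

theorem mem_forms_natCast {n : ℕ} : f ∈ forms Fq n ↔ f.IsHomogeneous n :=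
  ⟨fun h ↦ h.1, fun h ↦ ⟨h, fun hn ↦ absurd hn (by omega)⟩⟩

theorem nonneg_of_mem_forms (hf : f ∈ forms Fq n) (h0 : f ≠ 0) : 0 ≤ n :=
  not_lt.1 fun hn ↦ h0 (hf.2 hn)

theorem forms_of_neg (hn : n < 0) : forms Fq n = ⊥ :=
  eq_bot_iff.2 fun _ hf ↦ hf.2 hn

theorem eq_of_mem_forms (ha : f ∈ forms Fq a) (hb : f ∈ forms Fq b) (h0 : f ≠ 0) : a = b := by
  lift a to ℕ using nonneg_of_mem_forms ha h0
  lift b to ℕ using nonneg_of_mem_forms hb h0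
  rw [(mem_forms_natCast.1 ha).inj_right (mem_forms_natCast.1 hb) h0]

theorem mul_mem_forms (hf : f ∈ forms Fq a) (hg : g ∈ forms Fq b) : f * g ∈ forms Fq (a + b) := by
  by_cases h0 : f * g = 0
  · rw [h0]
    exact zero_mem _
  · lift a to ℕ using nonneg_of_mem_forms hf (left_ne_zero_of_mul h0)
    lift b to ℕ using nonneg_of_mem_forms hg (right_ne_zero_of_mul h0)
    exact mem_forms_natCast.2 ((mem_forms_natCast.1 hf).mul (mem_forms_natCast.1 hg))

theorem pow_mem_forms (hf : f ∈ forms Fq a) (m : ℕ) : f ^ m ∈ forms Fq (m * a) := by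
  induction m with
  | zero => simpa using mem_forms_natCast.2 (MvPolynomial.isHomogeneous_one (Fin 2) Fq)
  | succ m ih =>
    rw [pow_succ, Nat.cast_succ, add_one_mul]
    exact mul_mem_forms ih hf

theorem exists_mem_forms_of_mul_mem (h : f * g ∈ forms Fq n) (h0 : f * g ≠ 0) :
    ∃ m : ℕ, f ∈ forms Fq m := by
  lift n to ℕ using nonneg_of_mem_forms h h0
  exact ⟨_, mem_forms_natCast.2 (isHomogeneous_of_mul (mem_forms_natCast.1 h) h0)⟩

theorem mem_forms_of_mul_mem (h : f * g ∈ forms Fq a) (hf : f ∈ forms Fq b) (h0 : f ≠ 0) :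
    g ∈ forms Fq (a - b) := by
  by_cases hg0 : g = 0
  · rw [hg0]
    exact zero_mem _
  · have hfg0 := mul_ne_zero h0 hg0
    obtain ⟨c, hc⟩ := exists_mem_forms_of_mul_mem (mul_comm f g ▸ h) (mul_comm f g ▸ hfg0)
    rwa [show a - b = c by linarith [eq_of_mem_forms h (mul_mem_forms hf hc) hfg0]]

theorem evalAt_eq_zero_iff (P : P1Pt Fq) (hf : f ∈ forms Fq n) :
    evalAt P f = 0 ↔ P.primeForm ∣ f := by
  by_cases h0 : f = 0
  · simp [h0]
  · lift n to ℕ using nonneg_of_mem_forms hf h0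
    exact evalAt_eq_zero_iff_primeForm_dvd P (mem_forms_natCast.1 hf)

theorem P1Pt.primeForm_mem_forms (P : P1Pt Fq) : P.primeForm ∈ forms Fq P.deg :=
  mem_forms_natCast.2 P.isHomogeneous_primeForm

theorem mem_degreeLT_succ {R : Type*} [Semiring R] {p : Polynomial R} {n : ℕ} :
    p ∈ Polynomial.degreeLT R (n + 1) ↔ p.natDegree ≤ n := by
  rw [Polynomial.mem_degreeLT, Polynomial.degree_lt_iff_coeff_zero,
    Polynomial.natDegree_le_iff_coeff_eq_zero]
  rfl

theorem range_homogenizeLM_degreeLT (n : ℕ) :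
    LinearMap.range ((Polynomial.homogenizeLM n).domRestrict (Polynomial.degreeLT Fq (n + 1))) =
      forms Fq n := by
  ext f
  rw [mem_forms_natCast]
  constructor
  · rintro ⟨g, rfl⟩
    exact Polynomial.isHomogeneous_homogenize _
  · intro hf
    have hlt : dehomogenize f ∈ Polynomial.degreeLT Fq (n + 1) :=
      mem_degreeLT_succ.2 (natDegree_dehomogenize_le hf)
    exact ⟨⟨_, hlt⟩, homogenize_dehomogenize hf⟩

theorem finrank_forms_natCast (n : ℕ) : Module.finrank Fq (forms Fq n) = n + 1 := by
  have hinj : Function.Injective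
      ((Polynomial.homogenizeLM n).domRestrict (Polynomial.degreeLT Fq (n + 1))) := by
    intro g h hgh
    apply Subtype.ext
    rw [← dehomogenize_homogenize (mem_degreeLT_succ.1 g.2),
      ← dehomogenize_homogenize (mem_degreeLT_succ.1 h.2)]
    exact congrArg dehomogenize hgh
  rw [← range_homogenizeLM_degreeLT, LinearMap.finrank_range_of_inj hinj,
    (Polynomial.degreeLTEquiv Fq (n + 1)).finrank_eq, Module.finrank_fin_fun]

instance (n : ℤ) : Module.Finite Fq (forms Fq n) := by
  rcases lt_or_ge n 0 with hn | hn
  · rw [forms_of_neg hn]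
    infer_instance
  · lift n to ℕ using hn
    exact Module.finite_of_finrank_pos (by rw [finrank_forms_natCast]; omega)

theorem finrank_forms (n : ℤ) : Module.finrank Fq (forms Fq n) = (n + 1).toNat := by
  rcases lt_or_ge n 0 with hn | hn
  · rw [forms_of_neg hn, finrank_bot]
    omega
  · lift n to ℕ using hn
    rw [finrank_forms_natCast]
    omega

end Forms

/-- Simultaneous evaluation of a form at the points of the reduced divisor `D`. -/
def evalOn (D : Finset (P1Pt Fq)) : CoordRing Fq →ₗ[Fq] ((P : D) → P.1.Res) :=
  LinearMap.pi fun P ↦ (evalAt P.1).toLinearMap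

/-- The form cutting out the reduced divisor `D`. -/
def divisorForm (D : Finset (P1Pt Fq)) : CoordRing Fq := ∏ P ∈ D, P.primeForm

section Divisor

variable {n : ℤ} {f : CoordRing Fq} {D : Finset (P1Pt Fq)}

theorem mem_ker_evalOn : f ∈ LinearMap.ker (evalOn D) ↔ ∀ P ∈ D, evalAt P f = 0 := by
  simp [evalOn, funext_iff]

theorem divisorForm_ne_zero (D : Finset (P1Pt Fq)) : divisorForm D ≠ 0 :=
  Finset.prod_ne_zero_iff.2 fun P _ ↦ P.primeForm_ne_zero

theorem divisorForm_mem_forms (D : Finset (P1Pt Fq)) : divisorForm D ∈ forms Fq (degD D) :=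
  mem_forms_natCast.2 (.prod _ _ _ fun P _ ↦ P.isHomogeneous_primeForm)

theorem divisorForm_dvd (hf : f ∈ forms Fq n) (hD : ∀ P ∈ D, evalAt P f = 0) :
    divisorForm D ∣ f := by
  induction D using Finset.induction_on generalizing f n with
  | empty => exact one_dvd f
  | insert P D hP ih =>
    obtain ⟨g, rfl⟩ := (evalAt_eq_zero_iff P hf).1 (hD P (Finset.mem_insert_self P D))
    rw [divisorForm, Finset.prod_insert hP]
    refine mul_dvd_mul_left _
      (ih (mem_forms_of_mul_mem hf P.primeForm_mem_forms P.primeForm_ne_zero) fun Q hQ ↦ ?_)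
    have hPQ : P ≠ Q := fun h ↦ hP (h ▸ hQ)
    have hzero := hD Q (Finset.mem_insert_of_mem hQ)
    rw [map_mul] at hzero
    exact (mul_eq_zero.1 hzero).resolve_left (evalAt_primeForm_ne_zero hPQ)

theorem degD_le_of_evalAt_eq_zero (hf : f ∈ forms Fq n) (h0 : f ≠ 0)
    (hD : ∀ P ∈ D, evalAt P f = 0) : (degD D : ℤ) ≤ n := by
  obtain ⟨g, rfl⟩ := divisorForm_dvd hf hD
  have hg := mem_forms_of_mul_mem hf (divisorForm_mem_forms D) (divisorForm_ne_zero D)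
  linarith [nonneg_of_mem_forms hg (right_ne_zero_of_mul h0)]

theorem forms_inf_ker_evalOn (n : ℤ) (D : Finset (P1Pt Fq)) :
    forms Fq n ⊓ LinearMap.ker (evalOn D) =
      (forms Fq (n - degD D)).map (LinearMap.mulLeft Fq (divisorForm D)) := by
  ext f
  rw [Submodule.mem_inf, mem_ker_evalOn, Submodule.mem_map]
  constructor
  · rintro ⟨hf, hD⟩
    obtain ⟨g, rfl⟩ := divisorForm_dvd hf hD
    exact ⟨g, mem_forms_of_mul_mem hf (divisorForm_mem_forms D) (divisorForm_ne_zero D), rfl⟩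
  · rintro ⟨g, hg, rfl⟩
    rw [LinearMap.mulLeft_apply]
    refine ⟨by simpa using mul_mem_forms (divisorForm_mem_forms D) hg, fun P hP ↦ ?_⟩
    rw [map_mul, divisorForm, map_prod, Finset.prod_eq_zero hP (evalAt_primeForm_self P), zero_mul]

theorem finrank_forms_inf_ker_evalOn (n : ℤ) (D : Finset (P1Pt Fq)) :
    Module.finrank Fq ↥(forms Fq n ⊓ LinearMap.ker (evalOn D)) = (n + 1 - degD D).toNat := by
  have hinj : Function.Injective (LinearMap.mulLeft Fq (divisorForm D)) :=
    fun _ _ h ↦ mul_left_cancel₀ (divisorForm_ne_zero D) h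
  rw [forms_inf_ker_evalOn, ← (Submodule.equivMapOfInjective _ hinj _).finrank_eq,
    finrank_forms, sub_add_eq_add_sub]

theorem finrank_pi_res (D : Finset (P1Pt Fq)) :
    Module.finrank Fq ((P : D) → P.1.Res) = degD D := by
  simp_rw [Module.finrank_pi_fintype, P1Pt.finrank_res]
  exact Finset.sum_coe_sort D P1Pt.deg

theorem map_evalOn_forms (h : (degD D : ℤ) ≤ n + 1) : (forms Fq n).map (evalOn D) = ⊤ := by
  apply Submodule.eq_top_of_finrank_eq
  have hrank := finrank_map_add_finrank_inf_ker (forms Fq n) (evalOn D)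
  rw [finrank_forms_inf_ker_evalOn, finrank_forms] at hrank
  rw [finrank_pi_res]
  omega

theorem exists_mem_forms_evalAt_eq (h : (degD D : ℤ) ≤ n + 1) (v : (P : D) → P.1.Res) :
    ∃ f ∈ forms Fq n, ∀ P : D, evalAt P.1 f = v P := by
  obtain ⟨f, hf, hfv⟩ : v ∈ (forms Fq n).map (evalOn D) := map_evalOn_forms h ▸ trivial
  exact ⟨f, hf, congrFun hfv⟩

end Divisor

/-! ### Binary forms and multiplication by linear forms -/

section BinaryForms

variable {S T : Type*} [CommRing S] [CommRing T] {n : ℕ}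

/-- The value at `v` of the binary form `∑ Aᵢ x^(n-1-i) yⁱ` of degree `n - 1` given by its `n`
coefficients, as a linear function of the coefficients. -/
def formEval (v : Fin 2 → S) : (Fin n → S) →ₗ[S] S :=
  Fintype.linearCombination S fun i : Fin n ↦ v 0 ^ (i.rev : ℕ) * v 1 ^ (i : ℕ)

theorem formEval_apply (v : Fin 2 → S) (A : Fin n → S) :
    formEval v A = ∑ i, A i * (v 0 ^ (i.rev : ℕ) * v 1 ^ (i : ℕ)) := rfl

theorem formEval_cons (v : Fin 2 → S) (a : S) (A : Fin n → S) :
    formEval v (Fin.cons a A : Fin (n + 1) → S) = a * v 0 ^ n + v 1 * formEval v A := by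
  simp_rw [formEval_apply, Fin.sum_univ_succ, Fin.cons_zero, Fin.cons_succ, Fin.rev_succ,
    Finset.mul_sum]
  simp [pow_succ, mul_comm, mul_left_comm]

theorem formEval_snoc (v : Fin 2 → S) (A : Fin n → S) (a : S) :
    formEval v (Fin.snoc A a : Fin (n + 1) → S) = v 0 * formEval v A + a * v 1 ^ n := by
  simp_rw [formEval_apply, Fin.sum_univ_castSucc, Fin.snoc_castSucc, Fin.snoc_last,
    Fin.rev_castSucc, Finset.mul_sum]
  simp [pow_succ, mul_assoc, mul_comm, mul_left_comm]

theorem map_formEval (φ : S →+* T) (v : Fin 2 → S) (A : Fin n → S) :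
    φ (formEval v A) = formEval (φ ∘ v) (φ ∘ A) := by
  simp [formEval_apply]

theorem formEval_single (v : Fin 2 → S) (i : Fin n) (a : S) :
    formEval v (Pi.single i a) = a * (v 0 ^ (i.rev : ℕ) * v 1 ^ (i : ℕ)) :=
  Fintype.linearCombination_apply_single S _ i a

theorem formEval_smul_left (t : S) (v : Fin 2 → S) (A : Fin (n + 1) → S) :
    formEval (t • v) A = t ^ n * formEval v A := by
  simp_rw [formEval_apply, Finset.mul_sum]
  refine Finset.sum_congr rfl fun i _ ↦ ?_
  have hpow : t ^ (i.rev : ℕ) * t ^ (i : ℕ) = t ^ n := by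
    rw [← pow_add, Fin.val_rev]
    congr 1
    omega
  simp only [Pi.smul_apply, smul_eq_mul, mul_pow, ← hpow]
  ring

theorem formEval_fin_two (v C : Fin 2 → S) : formEval v C = C 0 * v 0 + C 1 * v 1 := by
  simp [formEval_apply]

/-- Multiplication of binary forms by the linear form `C₀ x + C₁ y`, on coefficients. -/
def mulLinear (C : Fin 2 → S) : (Fin n → S) →ₗ[S] (Fin (n + 1) → S) where
  toFun B := C 0 • (Fin.snoc B 0 : Fin (n + 1) → S) + C 1 • (Fin.cons 0 B : Fin (n + 1) → S)
  map_add' B B' := by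
    have hsnoc : (Fin.snoc (B + B') 0 : Fin (n + 1) → S) = Fin.snoc B 0 + Fin.snoc B' 0 :=
      funext fun i ↦ Fin.lastCases (by simp) (by simp) i
    have hcons : (Fin.cons 0 (B + B') : Fin (n + 1) → S) = Fin.cons 0 B + Fin.cons 0 B' :=
      funext fun i ↦ Fin.cases (by simp) (by simp) i
    rw [hsnoc, hcons]
    module
  map_smul' t B := by
    have hsnoc : (Fin.snoc (t • B) 0 : Fin (n + 1) → S) = t • Fin.snoc B 0 :=
      funext fun i ↦ Fin.lastCases (by simp) (by simp) i
    have hcons : (Fin.cons 0 (t • B) : Fin (n + 1) → S) = t • Fin.cons 0 B :=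
      funext fun i ↦ Fin.cases (by simp) (by simp) i
    rw [hsnoc, hcons, RingHom.id_apply]
    module

theorem mulLinear_apply (C : Fin 2 → S) (B : Fin n → S) : mulLinear C B =
    C 0 • (Fin.snoc B 0 : Fin (n + 1) → S) + C 1 • (Fin.cons 0 B : Fin (n + 1) → S) := rfl

theorem mulLinear_cons (C : Fin 2 → S) (b : S) (B : Fin n → S) :
    mulLinear C (Fin.cons b B : Fin (n + 1) → S) =
      Fin.cons (C 0 * b) (mulLinear C B + Pi.single 0 (C 1 * b)) := by
  rw [mulLinear_apply, mulLinear_apply, ← Fin.cons_snoc_eq_snoc_cons]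
  funext i
  refine Fin.cases ?_ (fun i ↦ ?_) i
  · simp
  · refine Fin.cases ?_ (fun i ↦ ?_) i <;> simp

theorem mulLinear_of_eq_zero {C : Fin 2 → S} (h : C 0 = 0) (B : Fin n → S) :
    mulLinear C B = Fin.cons 0 (C 1 • B) := by
  rw [mulLinear_apply, h, zero_smul, zero_add]
  funext i
  refine Fin.cases ?_ (fun i ↦ ?_) i <;> simp

theorem formEval_mulLinear (v C : Fin 2 → S) (B : Fin n → S) :
    formEval v (mulLinear C B) = formEval v C * formEval v B := by
  rw [mulLinear_apply, map_add, map_smul, map_smul, formEval_snoc, formEval_cons,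
    formEval_fin_two]
  simp only [smul_eq_mul]
  ring

theorem map_mulLinear (φ : S →+* T) (C : Fin 2 → S) (B : Fin n → S) :
    φ ∘ mulLinear C B = mulLinear (φ ∘ C) (φ ∘ B) := by
  funext i
  simp only [mulLinear_apply, Function.comp_apply, Pi.add_apply, Pi.smul_apply, smul_eq_mul,
    map_add, map_mul]
  congr 2
  · refine Fin.lastCases ?_ (fun i ↦ ?_) i <;> simp
  · refine Fin.cases ?_ (fun i ↦ ?_) i <;> simp

theorem eq_zero_of_mulLinear_eq_zero [IsDomain S] {C : Fin 2 → S} (hC : C ≠ 0) {B : Fin n → S}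
    (h : mulLinear C B = 0) : B = 0 := by
  by_cases h0 : C 0 = 0
  · have h1 : C 1 ≠ 0 := fun h1 ↦ hC (funext (Fin.forall_fin_two.2 ⟨h0, h1⟩))
    rw [mulLinear_of_eq_zero h0] at h
    exact (smul_eq_zero.1 (funext fun i ↦ congrFun h i.succ)).resolve_left h1
  · induction n with
    | zero => exact Subsingleton.elim _ _
    | succ n ih =>
      induction B using Fin.consCases with
      | cons b B =>
      rw [mulLinear_cons] at h
      obtain rfl : b = 0 := (mul_eq_zero.1 (congrFun h 0)).resolve_left h0
      obtain rfl : B = 0 := ih <| by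
        simpa using (funext fun i ↦ congrFun h i.succ : mulLinear C B + _ = 0)
      exact funext (Fin.cases rfl fun _ ↦ rfl)

theorem exists_mulLinear_eq [IsDomain S] [DecompositionMonoid S] {C : Fin 2 → S}
    (hC : IsRelPrime (C 0) (C 1)) {A : Fin (n + 1) → S} (h : formEval ![-C 1, C 0] A = 0) :
    ∃ B : Fin n → S, mulLinear C B = A := by
  by_cases h0 : C 0 = 0
  · obtain ⟨u, hu⟩ : IsUnit (C 1) := isRelPrime_zero_left.1 (h0 ▸ hC)
    induction A using Fin.consCases with
    | cons a A =>
    have ha : a = 0 := by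
      rw [formEval_cons] at h
      simpa [h0, ← hu] using h
    refine ⟨(↑u⁻¹ : S) • A, ?_⟩
    rw [mulLinear_of_eq_zero h0, smul_smul, ← hu, Units.mul_inv, one_smul, ha]
  · induction n with
    | zero =>
      refine ⟨0, funext fun i ↦ ?_⟩
      rw [map_zero, Fin.fin_one_eq_zero i]
      simpa [formEval_apply] using h.symm
    | succ n ih =>
      induction A using Fin.consCases with
      | cons a A =>
      rw [formEval_cons, Matrix.cons_val_zero, Matrix.cons_val_one, Matrix.cons_val_fin_one] at h
      obtain ⟨b, rfl⟩ : C 0 ∣ a := by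
        have hdvd : C 0 ∣ a * (-C 1) ^ (n + 1) :=
          ⟨-formEval ![-C 1, C 0] A, by linear_combination h⟩
        exact (hC.neg_right.pow_right).dvd_of_dvd_mul_right hdvd
      obtain ⟨B, hB⟩ := ih (A := A - Pi.single 0 (C 1 * b)) <| mul_left_cancel₀ h0 <| by
        simp only [map_sub, formEval_single, Matrix.cons_val_zero, Fin.rev_zero, Fin.val_last,
          Fin.val_zero, pow_zero]
        linear_combination h
      exact ⟨Fin.cons b B, by rw [mulLinear_cons, hB, sub_add_cancel]⟩

end BinaryForms

section Roots

variable {S : Type*} [CommRing S] {n : ℕ}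

/-- The homogeneous coordinates of the points of the projective line over `S` that are `S`-rational
in the naive sense: `none` is `(1 : 0)` and `some z` is `(z : 1)`. -/
def homCoords : Option S → Fin 2 → S
  | none => ![1, 0]
  | some z => ![z, 1]

theorem formEval_homCoords_none (A : Fin (n + 1) → S) : formEval (homCoords none) A = A 0 := by
  induction A using Fin.consCases with
  | cons a A => simp [formEval_cons, homCoords]

theorem exists_smul_homCoords {C : Fin 2 → S} {z : Option S}
    (h : formEval (homCoords z) C = 0) :
    ∃ t : S, (![-C 1, C 0] : Fin 2 → S) = t • homCoords z := by
  rcases z with _ | z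
  · refine ⟨-C 1, ?_⟩
    have h0 : C 0 = 0 := by rwa [formEval_homCoords_none] at h
    simp [homCoords, h0]
  · refine ⟨C 0, ?_⟩
    have h1 : C 0 * z + C 1 = 0 := by simpa [formEval_fin_two, homCoords] using h
    simp [homCoords, neg_eq_of_add_eq_zero_left h1]

theorem formEval_eq_zero_of_common_root {C : Fin 2 → S} {A : Fin (n + 1) → S} {z : Option S}
    (hC : formEval (homCoords z) C = 0) (hA : formEval (homCoords z) A = 0) :
    formEval ![-C 1, C 0] A = 0 := by
  obtain ⟨t, ht⟩ := exists_smul_homCoords hC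
  rw [ht, formEval_smul_left, hA, mul_zero]

theorem formEval_homCoords_eq_zero_iff [Nontrivial S] {z w : Option S} :
    formEval (homCoords w) ![homCoords z 1, -homCoords z 0] = 0 ↔ w = z := by
  rw [formEval_fin_two]
  rcases z with _ | z <;> rcases w with _ | w <;> simp [homCoords, ← sub_eq_add_neg, sub_eq_zero]

theorem isRelPrime_homCoords (z : Option S) : IsRelPrime (homCoords z 0) (homCoords z 1) := by
  rcases z with _ | z
  · exact isRelPrime_one_left
  · exact isRelPrime_one_right

theorem exists_mulLinear_eq_of_root [IsDomain S] [DecompositionMonoid S] {z : Option S}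
    {A : Fin (n + 1) → S} (h : formEval (homCoords z) A = 0) :
    ∃ B : Fin n → S, mulLinear ![homCoords z 1, -homCoords z 0] B = A := by
  refine exists_mulLinear_eq (isRelPrime_homCoords z).symm.neg_right ?_
  convert h
  funext i
  fin_cases i <;> simp

theorem card_filter_formEval_le [IsDomain S] [DecompositionMonoid S] [Fintype S]
    {A : Fin (n + 1) → S} (hA : A ≠ 0) :
    (Finset.univ.filter fun z : Option S ↦ formEval (homCoords z) A = 0).card ≤ n := by
  induction n with
  | zero =>
    have h0 : A 0 ≠ 0 := fun h ↦ hA (funext fun i ↦ Fin.fin_one_eq_zero i ▸ h)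
    simp [formEval_apply, h0]
  | succ n ih =>
    by_cases hroot : ∃ z, formEval (homCoords z) A = 0
    swap
    · simp [Finset.filter_false_of_mem fun z _ hz ↦ hroot ⟨z, hz⟩]
    obtain ⟨z, hz⟩ := hroot
    obtain ⟨B, rfl⟩ := exists_mulLinear_eq_of_root hz
    have hB : B ≠ 0 := fun hB ↦ hA (by rw [hB, map_zero])
    have hsub : (Finset.univ.filter fun w ↦ formEval (homCoords w) (mulLinear
        ![homCoords z 1, -homCoords z 0] B) = 0) ⊆
        insert z (Finset.univ.filter fun w ↦ formEval (homCoords w) B = 0) := fun w hw ↦ by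
      simpa [formEval_mulLinear, formEval_homCoords_eq_zero_iff] using hw
    exact (Finset.card_le_card hsub).trans
      ((Finset.card_insert_le _ _).trans (Nat.succ_le_succ (ih hB)))

end Roots

/-! ### Sections through prescribed points of the fibres -/

section Sections

/-- The sections of `O(n - 1, b)` on the Hirzebruch surface `F_k`, as tuples of `n` coefficients. -/
def sections (Fq : Type) [Field Fq] (n : ℕ) (b : ℤ) (k : ℕ) :
    Submodule Fq (Fin n → CoordRing Fq) :=
  Submodule.pi Set.univ fun i ↦ forms Fq (b - i * k)

variable {n k : ℕ} {b m : ℤ}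

theorem mem_sections {A : Fin n → CoordRing Fq} :
    A ∈ sections Fq n b k ↔ ∀ i : Fin n, A i ∈ forms Fq (b - i * k) := by
  simp [sections, Submodule.mem_pi]

theorem cons_mem_sections {a : CoordRing Fq} {A : Fin n → CoordRing Fq} :
    (Fin.cons a A : Fin (n + 1) → CoordRing Fq) ∈ sections Fq (n + 1) b k ↔
      a ∈ forms Fq b ∧ A ∈ sections Fq n (b - k) k := by
  have hdeg (i : Fin n) : b - (i.succ : ℕ) * k = b - k - (i : ℕ) * k := by
    rw [Fin.val_succ]
    push_cast
    ring
  simp_rw [mem_sections, Fin.forall_fin_succ, Fin.cons_zero, Fin.cons_succ, hdeg]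
  simp

theorem mem_sections_two {C : Fin 2 → CoordRing Fq} :
    C ∈ sections Fq 2 m k ↔ C 0 ∈ forms Fq m ∧ C 1 ∈ forms Fq (m - k) := by
  simp [mem_sections]

theorem single_mem_sections {i : Fin n} {f : CoordRing Fq} (hf : f ∈ forms Fq (b - i * k)) :
    Pi.single i f ∈ sections Fq n b k := by
  refine mem_sections.2 fun j ↦ ?_
  obtain rfl | hij := eq_or_ne j i
  · rwa [Pi.single_eq_same]
  · rw [Pi.single_eq_of_ne hij]
    exact zero_mem _

/-- A section, viewed as the tuple of its coefficients in their spaces of forms. -/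
def sectionsEquivPi (n : ℕ) (b : ℤ) (k : ℕ) :
    sections Fq n b k ≃ₗ[Fq] ((i : Fin n) → forms Fq (b - i * k)) where
  toFun A i := ⟨A.1 i, mem_sections.1 A.2 i⟩
  invFun A := ⟨fun i ↦ A i, mem_sections.2 fun i ↦ (A i).2⟩
  map_add' _ _ := rfl
  map_smul' _ _ := rfl

instance (n : ℕ) (b : ℤ) (k : ℕ) : Module.Finite Fq (sections Fq n b k) :=
  Module.Finite.equiv (sectionsEquivPi n b k).symm

theorem finrank_sections (n : ℕ) (b : ℤ) (k : ℕ) :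
    Module.finrank Fq (sections Fq n b k) = ∑ i : Fin n, (b - i * k + 1).toNat := by
  simp_rw [(sectionsEquivPi n b k).finrank_eq, Module.finrank_pi_fintype, finrank_forms]

theorem mem_sections_of_mulLinear_mem {C : Fin 2 → CoordRing Fq} {B : Fin n → CoordRing Fq}
    (h : mulLinear C B ∈ sections Fq (n + 1) b k) (hC : C ∈ sections Fq 2 m k) (hC0 : C ≠ 0) :
    B ∈ sections Fq n (b - m) k := by
  obtain ⟨h0, h1⟩ := mem_sections_two.1 hC
  by_cases hzero : C 0 = 0
  · have hone : C 1 ≠ 0 := fun hone ↦ hC0 (funext (Fin.forall_fin_two.2 ⟨hzero, hone⟩))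
    rw [mulLinear_of_eq_zero hzero] at h
    refine mem_sections.2 fun i ↦ ?_
    convert mem_forms_of_mul_mem (mem_sections.1 (cons_mem_sections.1 h).2 i) h1 hone using 2
    ring
  · induction n generalizing b with
    | zero => exact mem_sections.2 fun i ↦ i.elim0
    | succ n ih =>
      induction B using Fin.consCases with
      | cons f B =>
      rw [mulLinear_cons] at h
      obtain ⟨hf, hB⟩ := cons_mem_sections.1 h
      have hf' := mem_forms_of_mul_mem hf h0 hzero
      refine cons_mem_sections.2 ⟨hf', ?_⟩
      have hsingle : Pi.single 0 (C 1 * f) ∈ sections Fq (n + 1) (b - k) k := by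
        refine single_mem_sections ?_
        convert mul_mem_forms h1 hf' using 2
        simp
      convert ih ((Submodule.add_mem_iff_left _ hsingle).1 hB) using 2
      ring

theorem formEval_mem_forms {C : Fin 2 → CoordRing Fq} {A : Fin (n + 1) → CoordRing Fq}
    (hC : C ∈ sections Fq 2 m k) (hA : A ∈ sections Fq (n + 1) b k) :
    formEval ![-C 1, C 0] A ∈ forms Fq (b + n * m - n * k) := by
  obtain ⟨h0, h1⟩ := mem_sections_two.1 hC
  rw [formEval_apply]
  refine Submodule.sum_mem _ fun i _ ↦ ?_
  rw [Matrix.cons_val_zero, Matrix.cons_val_one, Matrix.cons_val_fin_one]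
  convert mul_mem_forms (mem_sections.1 hA i) (mul_mem_forms
    (pow_mem_forms (neg_mem h1) i.rev) (pow_mem_forms h0 i)) using 2
  have hrev : ((i.rev : ℕ) : ℤ) = n - i := by
    rw [Fin.val_rev]
    omega
  rw [hrev]
  ring

end Sections

section Vanishing

variable {n k : ℕ} {b m : ℤ}

/-- The value of a binary form over `CoordRing Fq` at a relative degree one point of the fibre
over `P`. -/
def fiberEval (P : P1Pt Fq) (z : Option P.Res) : (Fin n → CoordRing Fq) →ₗ[Fq] P.Res :=
  (formEval (homCoords z)).restrictScalars Fq ∘ₗ (evalAt P).toLinearMap.compLeft (Fin n)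

theorem fiberEval_apply (P : P1Pt Fq) (z : Option P.Res) (A : Fin n → CoordRing Fq) :
    fiberEval P z A = formEval (homCoords z) (evalAt P ∘ A) := rfl

theorem fiberEval_mulLinear (P : P1Pt Fq) (z : Option P.Res) (C : Fin 2 → CoordRing Fq)
    (B : Fin n → CoordRing Fq) :
    fiberEval P z (mulLinear C B) = fiberEval P z C * fiberEval P z B := by
  simp_rw [fiberEval_apply, ← formEval_mulLinear]
  congr 1
  exact map_mulLinear (evalAt P).toRingHom C B

theorem fiberEval_smul (P : P1Pt Fq) (z : Option P.Res) (g : CoordRing Fq)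
    (A : Fin n → CoordRing Fq) : fiberEval P z (g • A) = evalAt P g * fiberEval P z A := by
  have hcomp : evalAt P ∘ (g • A) = evalAt P g • (evalAt P ∘ A) := by
    funext i
    simp
  rw [fiberEval_apply, hcomp, map_smul, smul_eq_mul, fiberEval_apply]

theorem evalAt_formEval_eq_zero {P : P1Pt Fq} {z : Option P.Res} {C : Fin 2 → CoordRing Fq}
    {A : Fin (n + 1) → CoordRing Fq} (hC : fiberEval P z C = 0) (hA : fiberEval P z A = 0) :
    evalAt P (formEval ![-C 1, C 0] A) = 0 := by
  refine (map_formEval (evalAt P).toRingHom _ _).trans ?_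
  rw [fiberEval_apply] at hC hA
  convert formEval_eq_zero_of_common_root hC hA using 3
  · funext i
    fin_cases i <;> simp
  · rfl

/-- The sections that vanish at the point `σ P` of the fibre over `P` for every `P` in `D`. -/
def sectionsThrough (n : ℕ) (b : ℤ) (k : ℕ) (D : Finset (P1Pt Fq))
    (σ : (P : P1Pt Fq) → Option P.Res) : Submodule Fq (Fin n → CoordRing Fq) :=
  sections Fq n b k ⊓ LinearMap.ker (LinearMap.pi fun P : D ↦ fiberEval P.1 (σ P))

variable {D : Finset (P1Pt Fq)} {σ : (P : P1Pt Fq) → Option P.Res}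

theorem mem_sectionsThrough {A : Fin n → CoordRing Fq} :
    A ∈ sectionsThrough n b k D σ ↔
      A ∈ sections Fq n b k ∧ ∀ P ∈ D, fiberEval P (σ P) A = 0 := by
  simp [sectionsThrough, funext_iff]

instance : Module.Finite Fq (sectionsThrough n b k D σ) :=
  Submodule.finiteDimensional_of_le inf_le_left

theorem finrank_sections_le (n : ℕ) (b : ℤ) (k : ℕ) (D : Finset (P1Pt Fq))
    (σ : (P : P1Pt Fq) → Option P.Res) : Module.finrank Fq (sections Fq n b k) ≤
      Module.finrank Fq (sectionsThrough n b k D σ) + degD D := by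
  rw [sectionsThrough, ← finrank_pi_res, add_comm,
    ← finrank_map_add_finrank_inf_ker _ (LinearMap.pi fun P : D ↦ fiberEval P.1 (σ P))]
  gcongr
  exact Submodule.finrank_le _

theorem exists_mem_sections_fiberEval_eq (h : (degD D : ℤ) ≤ b - n * k + 1)
    (σ : (P : P1Pt Fq) → Option P.Res) (v : (P : D) → P.1.Res) :
    ∃ A ∈ sections Fq (n + 1) b k, ∀ P : D, fiberEval P.1 (σ P) A = v P := by
  have hb : b - n * k ≤ b := sub_le_self _ (by positivity)
  obtain ⟨f, hf, hfv⟩ := exists_mem_forms_evalAt_eq (n := b) (by omega)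
    fun P : D ↦ if σ P = none then v P else 0
  obtain ⟨g, hg, hgv⟩ := exists_mem_forms_evalAt_eq h fun P : D ↦ if σ P = none then 0 else v P
  refine ⟨Pi.single 0 f + Pi.single (Fin.last n) g, add_mem (single_mem_sections (by simpa))
    (single_mem_sections (by simpa)), fun P ↦ ?_⟩
  have hcomp (i : Fin (n + 1)) (a : CoordRing Fq) :
      evalAt P.1 ∘ Pi.single i a = Pi.single i (evalAt P.1 a) :=
    (Pi.single_op (fun _ ↦ evalAt P.1) (fun _ ↦ map_zero _) i a).symm
  rw [map_add, fiberEval_apply, fiberEval_apply, hcomp, hcomp, formEval_single, formEval_single,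
    hfv, hgv]
  cases σ P.1 <;> simp [homCoords]

theorem degD_add_finrank_sectionsThrough (h : (degD D : ℤ) ≤ b - n * k + 1) :
    degD D + Module.finrank Fq (sectionsThrough (n + 1) b k D σ) =
      Module.finrank Fq (sections Fq (n + 1) b k) := by
  have hsurj : (sections Fq (n + 1) b k).map
      (LinearMap.pi fun P : D ↦ fiberEval P.1 (σ P)) = ⊤ := by
    refine (Submodule.eq_top_iff').2 fun v ↦ ?_
    obtain ⟨A, hA, hAv⟩ := exists_mem_sections_fiberEval_eq h σ v
    exact ⟨A, hA, funext hAv⟩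
  rw [sectionsThrough, ← finrank_pi_res, ← finrank_top, ← hsurj, finrank_map_add_finrank_inf_ker]

theorem finrank_sectionsThrough_le {C : Fin 2 → CoordRing Fq} (hC : C ∈ sections Fq 2 m k)
    (hrel : IsRelPrime (C 0) (C 1)) (D : Finset (P1Pt Fq))
    (σ : (P : P1Pt Fq) → Option P.Res) :
    Module.finrank Fq (sectionsThrough (n + 1) b k D σ) ≤
      (b + n * m - n * k + 1 - degD (D.filter fun P ↦ fiberEval P (σ P) C = 0)).toNat +
      Module.finrank Fq (sectionsThrough n (b - m) k
        (D.filter fun P ↦ fiberEval P (σ P) C ≠ 0) σ) := by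
  have hC0 : C ≠ 0 := by
    rintro rfl
    exact not_isRelPrime_zero_zero hrel
  rw [← finrank_map_add_finrank_inf_ker (sectionsThrough (n + 1) b k D σ)
    ((formEval ![-C 1, C 0]).restrictScalars Fq), ← finrank_forms_inf_ker_evalOn]
  have : Module.Finite Fq ↥(forms Fq (b + n * m - n * k) ⊓ LinearMap.ker
      (evalOn (D.filter fun P ↦ fiberEval P (σ P) C = 0))) :=
    Submodule.finiteDimensional_of_le inf_le_left
  refine add_le_add (Submodule.finrank_mono ?_) ?_
  · rintro _ ⟨A, hA, rfl⟩
    obtain ⟨hA, hσ⟩ := mem_sectionsThrough.1 hA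
    refine ⟨formEval_mem_forms hC hA, mem_ker_evalOn.2 fun P hP ↦ ?_⟩
    obtain ⟨hPD, hPC⟩ := Finset.mem_filter.1 hP
    exact evalAt_formEval_eq_zero hPC (hσ P hPD)
  · refine le_trans (Submodule.finrank_mono ?_)
      (Submodule.finrank_map_le ((mulLinear C).restrictScalars Fq) _)
    rintro A ⟨hA, hker⟩
    obtain ⟨hA, hσ⟩ := mem_sectionsThrough.1 hA
    obtain ⟨B, rfl⟩ := exists_mulLinear_eq hrel hker
    refine ⟨B, mem_sectionsThrough.2 ⟨mem_sections_of_mulLinear_mem hA hC hC0, fun P hP ↦ ?_⟩, rfl⟩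
    obtain ⟨hPD, hPC⟩ := Finset.mem_filter.1 hP
    have hzero := hσ P hPD
    rw [fiberEval_mulLinear] at hzero
    exact (mul_eq_zero.1 hzero).resolve_left hPC

end Vanishing

section Primitive

variable {k : ℕ} {a c : ℤ}

theorem exists_isRelPrime_smul_eq {S : Type*} [CommRing S] [IsDomain S]
    [UniqueFactorizationMonoid S] (E : Fin 2 → S) :
    ∃ (g : S) (C : Fin 2 → S), IsRelPrime (C 0) (C 1) ∧ E = g • C := by
  by_cases h1 : E 1 = 0
  · exact ⟨E 0, ![1, 0], isRelPrime_one_left, funext (Fin.forall_fin_two.2 (by simp [h1]))⟩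
  · obtain ⟨c₀, c₁, g, hrel, h0, h1⟩ :=
      UniqueFactorizationMonoid.exists_reduced_factors' (E 0) (E 1) h1
    exact ⟨g, ![c₀, c₁], hrel, funext (Fin.forall_fin_two.2 ⟨h0.symm, h1.symm⟩)⟩

theorem eq_zero_of_mem_forms_of_isUnit {f : CoordRing Fq} (hf : f ∈ forms Fq c) (hu : IsUnit f) :
    c = 0 := by
  obtain ⟨u, rfl⟩ := hu
  have hone : (u * ↑u⁻¹ : CoordRing Fq) ∈ forms Fq 0 := by
    rw [Units.mul_inv]
    exact mem_forms_natCast.2 (MvPolynomial.isHomogeneous_one _ _)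
  have hinv := mem_forms_of_mul_mem hone hf u.ne_zero
  linarith [nonneg_of_mem_forms hf u.ne_zero, nonneg_of_mem_forms hinv u⁻¹.ne_zero]

/-- The primitive sections of `O(1, c)`, that is, the equations of the horizontal curves of relative
degree one. -/
def primitiveSections (Fq : Type) [Field Fq] (c : ℤ) (k : ℕ) : Set (Fin 2 → CoordRing Fq) :=
  {C | C ∈ sections Fq 2 c k ∧ IsRelPrime (C 0) (C 1)}

theorem eq_zero_or_le_of_mem_primitiveSections {C : Fin 2 → CoordRing Fq}
    (hC : C ∈ primitiveSections Fq c k) : c = 0 ∨ k ≤ c := by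
  obtain ⟨hmem, hrel⟩ := hC
  obtain ⟨h0, h1⟩ := mem_sections_two.1 hmem
  by_cases hzero : C 1 = 0
  · rw [hzero, isRelPrime_zero_right] at hrel
    exact .inl (eq_zero_of_mem_forms_of_isUnit h0 hrel)
  · exact .inr (sub_nonneg.1 (nonneg_of_mem_forms h1 hzero))

theorem exists_primitiveSections_smul_eq {E : Fin 2 → CoordRing Fq}
    (hE : E ∈ sections Fq 2 a k) (hE0 : E ≠ 0) :
    ∃ c : ℕ, ∃ C ∈ primitiveSections Fq c k, ∃ g ∈ forms Fq (a - c), g ≠ 0 ∧ E = g • C := by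
  obtain ⟨g, C, hrel, rfl⟩ := exists_isRelPrime_smul_eq E
  have hg0 : g ≠ 0 := by
    rintro rfl
    exact hE0 (zero_smul _ C)
  obtain ⟨h0, h1⟩ := mem_sections_two.1 hE
  obtain ⟨j, hg⟩ : ∃ j : ℕ, g ∈ forms Fq j := by
    obtain hC | hC := hrel.ne_zero_or_ne_zero
    · exact exists_mem_forms_of_mul_mem h0 (mul_ne_zero hg0 hC)
    · exact exists_mem_forms_of_mul_mem h1 (mul_ne_zero hg0 hC)
  have hC : C ∈ primitiveSections Fq (a - j) k :=
    ⟨mem_sections_two.2 ⟨mem_forms_of_mul_mem h0 hg hg0, by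
      simpa only [sub_right_comm] using mem_forms_of_mul_mem h1 hg hg0⟩, hrel⟩
  have hnonneg : 0 ≤ a - j := by
    obtain h | h := eq_zero_or_le_of_mem_primitiveSections hC <;> omega
  refine ⟨(a - j).toNat, C, ?_, g, ?_, hg0, rfl⟩ <;> rw [Int.toNat_of_nonneg hnonneg]
  · exact hC
  · rwa [sub_sub_cancel]

end Primitive

section Dimension

variable {k : ℕ}

theorem degD_mono {T D : Finset (P1Pt Fq)} (h : T ⊆ D) : degD T ≤ degD D :=
  Finset.sum_le_sum_of_subset h

theorem degD_filter_add_degD_filter_not (D : Finset (P1Pt Fq)) (p : P1Pt Fq → Prop) :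
    degD (D.filter p) + degD (D.filter fun P ↦ ¬ p P) = degD D :=
  Finset.sum_filter_add_sum_filter_not D p _

theorem exists_ne_zero_mem_sectionsThrough_two {a : ℕ} {D : Finset (P1Pt Fq)}
    (h : degD D + k ≤ 2 * a + 1) (σ : (P : P1Pt Fq) → Option P.Res) :
    ∃ E ∈ sectionsThrough 2 a k D σ, E ≠ 0 := by
  refine (Submodule.ne_bot_iff _).1 fun hbot ↦ ?_
  have hle := finrank_sections_le 2 a k D σ
  rw [hbot, finrank_bot, finrank_sections, Fin.sum_univ_two] at hle
  norm_num at hle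
  omega

theorem exists_primitiveSections_degD_le {a : ℕ} {D : Finset (P1Pt Fq)}
    (h : degD D + k ≤ 2 * a + 1) (σ : (P : P1Pt Fq) → Option P.Res) :
    ∃ c : ℕ, ∃ C ∈ primitiveSections Fq c k,
      c + degD (D.filter fun P ↦ fiberEval P (σ P) C ≠ 0) ≤ a := by
  obtain ⟨E, hE, hE0⟩ := exists_ne_zero_mem_sectionsThrough_two h σ
  obtain ⟨hmem, hσ⟩ := mem_sectionsThrough.1 hE
  obtain ⟨c, C, hC, g, hg, hg0, rfl⟩ := exists_primitiveSections_smul_eq hmem hE0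
  refine ⟨c, C, hC, ?_⟩
  have hdeg : (degD (D.filter fun P ↦ fiberEval P (σ P) C ≠ 0) : ℤ) ≤ a - c := by
    refine degD_le_of_evalAt_eq_zero hg hg0 fun P hP ↦ ?_
    obtain ⟨hPD, hPC⟩ := Finset.mem_filter.1 hP
    have hzero := hσ P hPD
    rw [fiberEval_smul] at hzero
    exact (mul_eq_zero.1 hzero).resolve_right hPC
  omega

theorem finrank_sectionsThrough_four {ℓ : ℕ} {D : Finset (P1Pt Fq)} (h3 : 3 * k ≤ ℓ)
    (hD : degD D + 5 * k ≤ 2 * ℓ) (σ : (P : P1Pt Fq) → Option P.Res) :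
    Module.finrank Fq (sectionsThrough 4 ℓ k D σ) = 4 * ℓ + 4 - 6 * k - degD D ∨
    ∃ c : ℕ, c + 2 * k ≤ ℓ ∧ ∃ C ∈ primitiveSections Fq c k,
      Module.finrank Fq (sectionsThrough 4 ℓ k D σ) +
        degD (D.filter fun P ↦ fiberEval P (σ P) C ≠ 0) ≤
          Module.finrank Fq (sections Fq 3 (ℓ - c) k) := by
  obtain ⟨c, C, hC, hdeg⟩ :=
    exists_primitiveSections_degD_le (k := k) (a := (degD D + k) / 2) (D := D) (by omega) σ
  have hlower := finrank_sections_le 4 ℓ k D σ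
  have hupper : Module.finrank Fq (sectionsThrough 4 ℓ k D σ) ≤
      (ℓ + 3 * c - 3 * k + 1 -
        degD (D.filter fun P ↦ fiberEval P (σ P) C = 0) : ℤ).toNat +
      Module.finrank Fq (sectionsThrough 3 (ℓ - c) k
        (D.filter fun P ↦ fiberEval P (σ P) C ≠ 0) σ) :=
    finrank_sectionsThrough_le hC.1 hC.2 D σ
  have hsplit := degD_filter_add_degD_filter_not D fun P ↦ fiberEval P (σ P) C = 0
  have hoff : degD (D.filter fun P ↦ fiberEval P (σ P) C ≠ 0) +
      Module.finrank Fq (sectionsThrough 3 (ℓ - c) k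
        (D.filter fun P ↦ fiberEval P (σ P) C ≠ 0) σ) =
      Module.finrank Fq (sections Fq 3 (ℓ - c) k) :=
    degD_add_finrank_sectionsThrough (by push_cast; omega)
  simp_rw [finrank_sections, Fin.sum_univ_four, Fin.sum_univ_three] at hlower hoff ⊢
  norm_num at hlower hsplit hoff hdeg ⊢
  by_cases hN : (degD (D.filter fun P ↦ fiberEval P (σ P) C = 0) : ℤ) ≤ ℓ + 3 * c - 3 * k + 1
  · left
    omega
  · right
    exact ⟨c, by omega, C, hC, by omega⟩

end Dimension

/-! ### Sums over the cubic forms -/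

section ChoiceFunctions

variable {ι R : Type*} {β : ι → Type*} [∀ i, Fintype (β i)] [∀ i, Inhabited (β i)]

/-- The functions choosing an element of `β i` for every `i` in `D`. They take the default value
outside `D`, so that they are total and finite in number. -/
def choiceFunctions (β : ι → Type*) [∀ i, Fintype (β i)] [∀ i, Inhabited (β i)] (D : Finset ι) :
    Finset (∀ i, β i) :=
  Finset.univ.image fun (σ : ∀ i : D, β i) i ↦ if h : i ∈ D then σ ⟨i, h⟩ else default

theorem prod_sum_eq_sum_choiceFunctions [CommSemiring R] (D : Finset ι) (f : ∀ i, β i → R) :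
    ∏ i ∈ D, ∑ z, f i z = ∑ σ ∈ choiceFunctions β D, ∏ i ∈ D, f i (σ i) := by
  rw [choiceFunctions, Finset.sum_image, ← Finset.prod_coe_sort, Finset.prod_univ_sum,
    Fintype.piFinset_univ]
  · refine Finset.sum_congr rfl fun σ _ ↦ ?_
    rw [← Finset.prod_coe_sort D]
    simp
  · intro σ _ τ _ h
    funext i
    simpa using congrFun h i

theorem prod_sub_one_eq_sum_powerset [DecidableEq ι] [CommRing R] (D : Finset ι) (f : ι → R) :
    ∏ i ∈ D, (f i - 1) = ∑ T ∈ D.powerset, (-1) ^ (D \ T).card * ∏ i ∈ T, f i := by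
  simp_rw [sub_eq_add_neg, Finset.prod_add, Finset.prod_const, mul_comm]

theorem sum_powerset_pow_card [CommSemiring R] (D : Finset ι) (r : R) :
    ∑ T ∈ D.powerset, r ^ T.card = (r + 1) ^ D.card := by
  simpa using (Finset.prod_add_one (f := fun _ ↦ r) D).symm

theorem sum_le_sum_of_forall_exists_eq {α M : Type*} [AddCommMonoid M] [PartialOrder M]
    [IsOrderedAddMonoid M] {S : Finset α} {T : Finset ι} {φ : ι → α} {f : α → M}
    (hf : ∀ a, 0 ≤ f a) (h : ∀ a ∈ S, ∃ t ∈ T, φ t = a) : ∑ a ∈ S, f a ≤ ∑ t ∈ T, f (φ t) :=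
  (Finset.sum_le_sum_of_subset_of_nonneg (fun a ha ↦ Finset.mem_image.2 (h a ha))
    fun a _ _ ↦ hf a).trans (Finset.sum_image_le_of_nonneg fun a _ ↦ hf a)

end ChoiceFunctions

section LinearFactors

variable {n k ℓ : ℕ} {b : ℤ} {D : Finset (P1Pt Fq)}

instance (P : P1Pt Fq) : DecompositionMonoid P.Res where
  primal a := by
    have hfield : IsField P.Res := isField_of_isIntegral_of_isField' (Field.toIsField Fq)
    by_cases ha : a = 0
    · exact ha ▸ isPrimal_zero
    · obtain ⟨b, hab⟩ := hfield.mul_inv_cancel ha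
      exact (IsUnit.of_mul_eq_one b hab).isPrimal

theorem evalAt_comp_ne_zero_of_mem_primitiveSections {c : ℤ} {C : Fin 2 → CoordRing Fq}
    (hC : C ∈ primitiveSections Fq c k) (P : P1Pt Fq) : evalAt P ∘ C ≠ 0 := by
  obtain ⟨hmem, hrel⟩ := hC
  obtain ⟨h0, h1⟩ := mem_sections_two.1 hmem
  intro h
  have hunit := hrel ((evalAt_eq_zero_iff P h0).1 (congrFun h 0))
    ((evalAt_eq_zero_iff P h1).1 (congrFun h 1))
  exact not_isUnit_zero (evalAt_primeForm_self P ▸ hunit.map (evalAt P))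

/-- The degrees `c ≤ ℓ - 2k` of the linear forms that can divide a cubic form in
`H⁰(F_k, O(3,ℓ))`: a linear form without `y`-term may have its base part removed, which leaves
`c = 0`, while a nonzero `y`-coefficient forces `k ≤ c`. -/
def linearDegrees (ℓ k : ℕ) : Finset ℕ :=
  (Finset.range (ℓ - 2 * k + 1)).filter fun c ↦ c = 0 ∨ k ≤ c

theorem finrank_sections_add_finrank_sections_le {c : ℕ} (h3 : 3 * k ≤ ℓ)
    (hc : c ∈ linearDegrees ℓ k) :
    Module.finrank Fq (sections Fq 2 c k) + Module.finrank Fq (sections Fq 3 (ℓ - c) k) + c ≤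
      3 * ℓ - 3 * k + 5 := by
  obtain ⟨hrange, hor⟩ := Finset.mem_filter.1 hc
  rw [Finset.mem_range] at hrange
  simp_rw [finrank_sections, Fin.sum_univ_two, Fin.sum_univ_three]
  norm_num
  omega

theorem degD_add_finrank_sectionsThrough_none (h : (degD D : ℤ) ≤ b + 1) :
    degD D + Module.finrank Fq (sectionsThrough (n + 1) b k D fun _ ↦ none) =
      Module.finrank Fq (sections Fq (n + 1) b k) := by
  have hsurj : (sections Fq (n + 1) b k).map
      (LinearMap.pi fun P : D ↦ fiberEval P.1 none) = ⊤ := by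
    refine (Submodule.eq_top_iff').2 fun v ↦ ?_
    obtain ⟨f, hf, hfv⟩ := exists_mem_forms_evalAt_eq h v
    refine ⟨Pi.single 0 f, single_mem_sections (by simpa), funext fun P ↦ ?_⟩
    rw [← hfv P]
    exact (formEval_homCoords_none _).trans (congrArg (evalAt P.1)
      (Pi.single_eq_same (M := fun _ : Fin (n + 1) ↦ CoordRing Fq) 0 f))
  rw [sectionsThrough, ← finrank_pi_res, ← finrank_top, ← hsurj, finrank_map_add_finrank_inf_ker]

theorem degD_le_of_evalAt_comp_eq_zero {A : Fin n → CoordRing Fq} (hA : A ∈ sections Fq n b k)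
    (h0 : A ≠ 0) (hD : ∀ P ∈ D, evalAt P ∘ A = 0) : (degD D : ℤ) ≤ b := by
  obtain ⟨i, hi⟩ := Function.ne_iff.1 h0
  exact (degD_le_of_evalAt_eq_zero (mem_sections.1 hA i) hi fun P hP ↦ congrFun (hD P hP) i).trans
    (sub_le_self _ (by positivity))

theorem mulLinear_fin_three (C : Fin 2 → CoordRing Fq) (B : Fin 3 → CoordRing Fq) :
    mulLinear C B = ![B 0 * C 0, B 0 * C 1 + B 1 * C 0, B 1 * C 1 + B 2 * C 0, B 2 * C 1] := by
  funext i
  fin_cases i <;> simp [mulLinear_apply, Fin.snoc, Fin.cons] <;> ring!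

theorem exists_mulLinear_eq_of_horizRed {s : Fin 4 → CoordRing Fq}
    (hs : s ∈ sections Fq 4 ℓ k) (hred : HorizRed k s) :
    ∃ c ∈ linearDegrees ℓ k, ∃ B ∈ sections Fq 3 (ℓ - c) k, ∃ C ∈ sections Fq 2 c k,
      mulLinear C B = s := by
  by_cases hlast : s 3 = 0
  · have hmul : mulLinear ![1, 0] ![s 0, s 1, s 2] = s := by
      rw [mulLinear_fin_three]
      funext i
      fin_cases i <;> simp [hlast]
    have hone : (![1, 0] : Fin 2 → CoordRing Fq) ∈ sections Fq 2 (0 : ℕ) k :=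
      mem_sections_two.2 ⟨mem_forms_natCast.2 (MvPolynomial.isHomogeneous_one _ _), zero_mem _⟩
    have hne : (![1, 0] : Fin 2 → CoordRing Fq) ≠ 0 := fun h ↦ one_ne_zero (congrFun h 0)
    exact ⟨0, by simp [linearDegrees], _, mem_sections_of_mulLinear_mem (hmul.symm ▸ hs) hone hne,
      _, hone, hmul⟩
  obtain rfl | ⟨_, c, B, C, -, hC0, -, hC, h0, h1, h2, hB2C1⟩ := hred
  · exact absurd rfl hlast
  have hmul : mulLinear C B = s := by
    rw [mulLinear_fin_three, ← h0, ← h1, ← h2, ← hB2C1]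
    funext i
    fin_cases i <;> rfl
  replace hC : C ∈ sections Fq 2 c k := mem_sections.2 hC
  have hB := mem_sections_of_mulLinear_mem (hmul.symm ▸ hs) hC hC0
  rw [hB2C1] at hlast
  have hC1 := nonneg_of_mem_forms (mem_sections_two.1 hC).2 (right_ne_zero_of_mul hlast)
  have hB2 := nonneg_of_mem_forms (mem_sections.1 hB 2) (left_ne_zero_of_mul hlast)
  lift c to ℕ using by omega
  refine ⟨c, Finset.mem_filter.2 ⟨Finset.mem_range.2 ?_, ?_⟩, B, hB, C, hC, hmul⟩
  · norm_num at hB2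
    omega
  · omega

end LinearFactors

section Counting

theorem fiberEval_none (P : P1Pt Fq) (s : Fin 4 → CoordRing Fq) :
    fiberEval P none s = resEval P (s 0) :=
  formEval_homCoords_none _

theorem fiberEval_some (P : P1Pt Fq) (z : P.Res) (s : Fin 4 → CoordRing Fq) :
    fiberEval P (some z) s =
      resEval P (s 0) * z ^ 3 + resEval P (s 1) * z ^ 2
        + resEval P (s 2) * z + resEval P (s 3) := by
  simp [fiberEval_apply, formEval_apply, Fin.sum_univ_four, homCoords, Fin.rev]
  rfl

variable [Fintype Fq]

local notation "q" => (Fintype.card Fq : ℝ)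

theorem two_le_card : 2 ≤ q := by
  exact_mod_cast Fintype.one_lt_card (α := Fq)

theorem card_pos : 0 < q := zero_lt_two.trans_le two_le_card

theorem one_le_card : 1 ≤ q := one_le_two.trans two_le_card

instance (P : P1Pt Fq) : Fintype P.Res := Fintype.ofFinite _

theorem P1Pt.card_res (P : P1Pt Fq) : (Fintype.card P.Res : ℝ) = q ^ P.deg := by
  rw [Module.card_eq_pow_finrank (K := Fq), P.finrank_res, Nat.cast_pow]

theorem pow_degD (D : Finset (P1Pt Fq)) : q ^ degD D = ∏ P ∈ D, q ^ P.deg :=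
  (Finset.prod_pow_eq_pow_sum D _ _).symm

/-- The finite set of vectors of a finite-dimensional subspace over the finite field `Fq`. -/
def elements {V : Type*} [AddCommGroup V] [Module Fq V] (S : Submodule Fq V)
    [Module.Finite Fq S] : Finset V :=
  have : Finite S := Module.finite_of_finite Fq
  (Set.toFinite (S : Set V)).toFinset

section Elements

variable {V : Type*} [AddCommGroup V] [Module Fq V] {S : Submodule Fq V} [Module.Finite Fq S]

theorem mem_elements {v : V} : v ∈ elements S ↔ v ∈ S := by
  simp [elements]

theorem card_elements : ((elements S).card : ℝ) = q ^ Module.finrank Fq S := by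
  have hcard : (elements S).card = Nat.card S := (Set.ncard_eq_toFinset_card _ _).symm
  rw [hcard, Module.natCard_eq_pow_finrank (K := Fq), Nat.card_eq_fintype_card, Nat.cast_pow]

end Elements

theorem rP_eq_sum (P : P1Pt Fq) (s : Fin 4 → CoordRing Fq) :
    (rP P s : ℝ) = ∑ z : Option P.Res, if fiberEval P z s = 0 then 1 else 0 := by
  simp_rw [Fintype.sum_option, rP, fiberEval_none, fiberEval_some, Finset.sum_boole,
    Nat.card_eq_fintype_card, Fintype.card_subtype]
  push_cast
  exact add_comm _ _

theorem sum_prod_rP (ℓ k : ℕ) (D : Finset (P1Pt Fq)) :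
    ∑ s ∈ elements (sections Fq 4 ℓ k), ∏ P ∈ D, (rP P s : ℝ) =
      ∑ σ ∈ choiceFunctions (fun P : P1Pt Fq ↦ Option P.Res) D,
        q ^ Module.finrank Fq (sectionsThrough 4 ℓ k D σ) := by
  simp_rw [rP_eq_sum, prod_sum_eq_sum_choiceFunctions]
  rw [Finset.sum_comm]
  refine Finset.sum_congr rfl fun σ _ ↦ ?_
  simp_rw [Finset.prod_ite_zero, Finset.prod_const_one, Finset.sum_boole]
  rw [← card_elements]
  congr 2
  ext s
  rw [Finset.mem_filter, mem_elements, mem_elements, mem_sectionsThrough]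

theorem sum_choiceFunctions_const (D : Finset (P1Pt Fq)) (x : ℝ) :
    ∑ _σ ∈ choiceFunctions (fun P : P1Pt Fq ↦ Option P.Res) D, x =
      (∏ P ∈ D, (q ^ P.deg + 1)) * x := by
  have hone := prod_sum_eq_sum_choiceFunctions (R := ℝ) (β := fun P : P1Pt Fq ↦ Option P.Res) D
    fun _ _ ↦ 1
  simp only [Finset.sum_const, Finset.card_univ, Fintype.card_option, nsmul_eq_mul, mul_one,
    Finset.prod_const_one, Nat.cast_add, Nat.cast_one, P1Pt.card_res] at hone
  rw [hone, Finset.sum_const, nsmul_eq_mul]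

variable {n k ℓ : ℕ} {D : Finset (P1Pt Fq)}

theorem card_filter_fiberEval_le {P : P1Pt Fq} {A : Fin (n + 1) → CoordRing Fq}
    (hA : evalAt P ∘ A ≠ 0) :
    (Finset.univ.filter fun z : Option P.Res ↦ fiberEval P z A = 0).card ≤ n :=
  card_filter_formEval_le hA

theorem sum_ite_fiberEval_le_two {c : ℤ} {C : Fin 2 → CoordRing Fq}
    (hC : C ∈ primitiveSections Fq c k) (P : P1Pt Fq) :
    ∑ z : Option P.Res, (if fiberEval P z C = 0 then 1 else (q ^ P.deg)⁻¹) ≤ 2 := by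
  have hq : 0 < q ^ P.deg := pow_pos card_pos _
  have hinv : (q ^ P.deg)⁻¹ ≤ 1 := inv_le_one_of_one_le₀ (one_le_pow₀ one_le_card)
  have hroots : ((Finset.univ.filter fun z : Option P.Res ↦ fiberEval P z C = 0).card : ℝ) ≤ 1 := by
    exact_mod_cast card_filter_fiberEval_le (evalAt_comp_ne_zero_of_mem_primitiveSections hC P)
  calc ∑ z : Option P.Res, (if fiberEval P z C = 0 then 1 else (q ^ P.deg)⁻¹)
      = ∑ z : Option P.Res,
          ((q ^ P.deg)⁻¹ + (1 - (q ^ P.deg)⁻¹) * if fiberEval P z C = 0 then 1 else 0) := by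
        refine Finset.sum_congr rfl fun z _ ↦ ?_
        split_ifs <;> ring
    _ = 1 + (q ^ P.deg)⁻¹ + (1 - (q ^ P.deg)⁻¹) *
          (Finset.univ.filter fun z : Option P.Res ↦ fiberEval P z C = 0).card := by
        rw [Finset.sum_add_distrib, ← Finset.mul_sum, Finset.sum_boole, Finset.sum_const,
          Finset.card_univ, Fintype.card_option, nsmul_eq_mul, Nat.cast_succ, P1Pt.card_res,
          add_mul, mul_inv_cancel₀ hq.ne', one_mul]
    _ ≤ 2 := by linarith [mul_le_of_le_one_right (sub_nonneg.2 hinv) hroots]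

theorem sum_inv_pow_degD_le {c : ℤ} {C : Fin 2 → CoordRing Fq}
    (hC : C ∈ primitiveSections Fq c k) (D : Finset (P1Pt Fq)) :
    ∑ σ ∈ choiceFunctions (fun P : P1Pt Fq ↦ Option P.Res) D,
      (q ^ degD (D.filter fun P ↦ fiberEval P (σ P) C ≠ 0))⁻¹ ≤ 2 ^ D.card := by
  have hprod (σ : (P : P1Pt Fq) → Option P.Res) :
      (q ^ degD (D.filter fun P ↦ fiberEval P (σ P) C ≠ 0))⁻¹ =
        ∏ P ∈ D, if fiberEval P (σ P) C = 0 then 1 else (q ^ P.deg)⁻¹ := by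
    rw [Finset.prod_ite, Finset.prod_const_one, one_mul, Finset.prod_inv_distrib, pow_degD]
  simp_rw [hprod]
  rw [← prod_sum_eq_sum_choiceFunctions D
    fun P z ↦ if fiberEval P z C = 0 then 1 else (q ^ P.deg)⁻¹, ← Finset.prod_const]
  refine Finset.prod_le_prod (fun P _ ↦ Finset.sum_nonneg fun z _ ↦ ?_)
    fun P _ ↦ sum_ite_fiberEval_le_two hC P
  split_ifs <;> positivity

theorem sum_linearDegrees_le (h3 : 3 * k ≤ ℓ) :
    ∑ c ∈ linearDegrees ℓ k,
      q ^ (Module.finrank Fq (sections Fq 2 c k) + Module.finrank Fq (sections Fq 3 (ℓ - c) k)) ≤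
      2 * q ^ (3 * ℓ - 3 * k + 5) := by
  have hterm (c : ℕ) (hc : c ∈ linearDegrees ℓ k) :
      q ^ (Module.finrank Fq (sections Fq 2 c k) + Module.finrank Fq (sections Fq 3 (ℓ - c) k)) ≤
        (1 / 2) ^ c * q ^ (3 * ℓ - 3 * k + 5) := by
    rw [one_div, inv_pow, inv_mul_eq_div, le_div_iff₀ (by positivity)]
    calc _ ≤ q ^ (Module.finrank Fq (sections Fq 2 c k) +
          Module.finrank Fq (sections Fq 3 (ℓ - c) k)) * q ^ c := by
          gcongr
          exact two_le_card
      _ ≤ q ^ (3 * ℓ - 3 * k + 5) := by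
          rw [← pow_add]
          exact pow_le_pow_right₀ one_le_card (finrank_sections_add_finrank_sections_le h3 hc)
  refine (Finset.sum_le_sum hterm).trans ?_
  rw [← Finset.sum_mul]
  gcongr
  exact (Finset.sum_le_sum_of_subset_of_nonneg (Finset.filter_subset _ _)
    fun _ _ _ ↦ by positivity).trans (sum_geometric_two_le _)

/-- The finite set of primitive linear forms of degree `c`. -/
def primitiveElements (Fq : Type) [Field Fq] [Fintype Fq] (c k : ℕ) :
    Finset (Fin 2 → CoordRing Fq) :=
  (elements (sections Fq 2 c k)).filter (· ∈ primitiveSections Fq c k)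

theorem mem_primitiveElements {c : ℕ} {C : Fin 2 → CoordRing Fq} :
    C ∈ primitiveElements Fq c k ↔ C ∈ primitiveSections Fq c k := by
  rw [primitiveElements, Finset.mem_filter, mem_elements]
  exact ⟨And.right, fun h ↦ ⟨h.1, h⟩⟩

theorem card_primitiveElements_le (c k : ℕ) :
    ((primitiveElements Fq c k).card : ℝ) ≤ q ^ Module.finrank Fq (sections Fq 2 c k) := by
  rw [← card_elements]
  exact_mod_cast Finset.card_filter_le _ _

theorem abs_pow_finrank_sectionsThrough_sub_le (h3 : 3 * k ≤ ℓ)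
    (hD : degD D + 5 * k ≤ 2 * ℓ) (σ : (P : P1Pt Fq) → Option P.Res) :
    |q ^ Module.finrank Fq (sectionsThrough 4 ℓ k D σ) - q ^ (4 * ℓ + 4 - 6 * k - degD D)| ≤
      ∑ c ∈ linearDegrees ℓ k, ∑ C ∈ primitiveElements Fq c k,
        q ^ Module.finrank Fq (sections Fq 3 (ℓ - c) k) *
          (q ^ degD (D.filter fun P ↦ fiberEval P (σ P) C ≠ 0))⁻¹ := by
  obtain h | ⟨c, hc, C, hC, h⟩ := finrank_sectionsThrough_four h3 hD σ
  · rw [h, sub_self, abs_zero]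
    positivity
  have hmem : c ∈ linearDegrees ℓ k :=
    Finset.mem_filter.2 ⟨Finset.mem_range.2 (by omega),
      by exact_mod_cast eq_zero_or_le_of_mem_primitiveSections hC⟩
  have hexp : 4 * ℓ + 4 - 6 * k - degD D ≤ Module.finrank Fq (sectionsThrough 4 ℓ k D σ) := by
    have hle := finrank_sections_le 4 ℓ k D σ
    simp_rw [finrank_sections, Fin.sum_univ_four] at hle
    norm_num at hle ⊢
    omega
  calc |q ^ Module.finrank Fq (sectionsThrough 4 ℓ k D σ) - q ^ (4 * ℓ + 4 - 6 * k - degD D)|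
      ≤ q ^ Module.finrank Fq (sectionsThrough 4 ℓ k D σ) := by
        rw [abs_of_nonneg (sub_nonneg.2 (pow_le_pow_right₀ one_le_card hexp))]
        exact sub_le_self _ (by positivity)
    _ ≤ q ^ Module.finrank Fq (sections Fq 3 (ℓ - c) k) *
          (q ^ degD (D.filter fun P ↦ fiberEval P (σ P) C ≠ 0))⁻¹ := by
        rw [← div_eq_mul_inv, le_div_iff₀ (by positivity), ← pow_add]
        exact pow_le_pow_right₀ one_le_card h
    _ ≤ ∑ C ∈ primitiveElements Fq c k, q ^ Module.finrank Fq (sections Fq 3 (ℓ - c) k) *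
          (q ^ degD (D.filter fun P ↦ fiberEval P (σ P) C ≠ 0))⁻¹ :=
        Finset.single_le_sum (f := fun C ↦ q ^ Module.finrank Fq (sections Fq 3 (ℓ - c) k) *
          (q ^ degD (D.filter fun P ↦ fiberEval P (σ P) C ≠ 0))⁻¹)
          (fun _ _ ↦ by positivity) (mem_primitiveElements.2 hC)
    _ ≤ _ := Finset.single_le_sum (f := fun c : ℕ ↦ ∑ C ∈ primitiveElements Fq c k,
          q ^ Module.finrank Fq (sections Fq 3 (ℓ - c) k) *
            (q ^ degD (D.filter fun P ↦ fiberEval P (σ P) C ≠ 0))⁻¹)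
          (fun _ _ ↦ by positivity) hmem

theorem abs_sum_prod_rP_sub_le (h3 : 3 * k ≤ ℓ)
    (hD : degD D + 5 * k ≤ 2 * ℓ) :
    |∑ s ∈ elements (sections Fq 4 ℓ k), ∏ P ∈ D, (rP P s : ℝ) -
      (∏ P ∈ D, (q ^ P.deg + 1)) * q ^ (4 * ℓ + 4 - 6 * k - degD D)| ≤
    2 * q ^ (3 * ℓ - 3 * k + 5) * 2 ^ D.card := by
  rw [sum_prod_rP, ← sum_choiceFunctions_const, ← Finset.sum_sub_distrib]
  calc _ ≤ ∑ σ ∈ choiceFunctions (fun P : P1Pt Fq ↦ Option P.Res) D,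
        ∑ c ∈ linearDegrees ℓ k, ∑ C ∈ primitiveElements Fq c k,
          q ^ Module.finrank Fq (sections Fq 3 (ℓ - c) k) *
            (q ^ degD (D.filter fun P ↦ fiberEval P (σ P) C ≠ 0))⁻¹ :=
        (Finset.abs_sum_le_sum_abs _ _).trans
          (Finset.sum_le_sum fun σ _ ↦ abs_pow_finrank_sectionsThrough_sub_le h3 hD σ)
    _ = ∑ c ∈ linearDegrees ℓ k, ∑ C ∈ primitiveElements Fq c k,
          q ^ Module.finrank Fq (sections Fq 3 (ℓ - c) k) *
            ∑ σ ∈ choiceFunctions (fun P : P1Pt Fq ↦ Option P.Res) D,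
              (q ^ degD (D.filter fun P ↦ fiberEval P (σ P) C ≠ 0))⁻¹ := by
        rw [Finset.sum_comm]
        refine Finset.sum_congr rfl fun c _ ↦ ?_
        rw [Finset.sum_comm]
        simp_rw [Finset.mul_sum]
    _ ≤ ∑ c ∈ linearDegrees ℓ k, ∑ _C ∈ primitiveElements Fq c k,
          q ^ Module.finrank Fq (sections Fq 3 (ℓ - c) k) * 2 ^ D.card := by
        gcongr with c _ C hC
        exact sum_inv_pow_degD_le (mem_primitiveElements.1 hC) D
    _ ≤ (∑ c ∈ linearDegrees ℓ k, q ^ (Module.finrank Fq (sections Fq 2 c k) +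
          Module.finrank Fq (sections Fq 3 (ℓ - c) k))) * 2 ^ D.card := by
        simp_rw [Finset.sum_const, nsmul_eq_mul, Finset.sum_mul, pow_add, ← mul_assoc]
        gcongr
        exact card_primitiveElements_le _ k
    _ ≤ _ := by
        gcongr
        exact sum_linearDegrees_le h3

theorem pow_sub_degD {N : ℕ} {D : Finset (P1Pt Fq)} (h : degD D ≤ N) :
    q ^ (N - degD D) =
      ∑ T ∈ D.powerset, (-1) ^ (D \ T).card * ((∏ P ∈ T, (q ^ P.deg + 1)) * q ^ (N - degD T)) := by
  have hq : 0 < q := card_pos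
  have hinv (T : Finset (P1Pt Fq)) (hT : degD T ≤ N) :
      q ^ (N - degD T) = q ^ N * ∏ P ∈ T, (q ^ P.deg)⁻¹ := by
    rw [Finset.prod_inv_distrib, ← pow_degD, pow_sub₀ _ hq.ne' hT]
  have hfactor (P : P1Pt Fq) : (q ^ P.deg)⁻¹ = (q ^ P.deg + 1) * (q ^ P.deg)⁻¹ - 1 := by
    field_simp
    ring
  rw [hinv D h, Finset.prod_congr rfl fun P _ ↦ hfactor P, prod_sub_one_eq_sum_powerset,
    Finset.mul_sum]
  refine Finset.sum_congr rfl fun T hT ↦ ?_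
  rw [hinv T ((degD_mono (Finset.mem_powerset.1 hT)).trans h),
    Finset.prod_mul_distrib]
  ring

theorem abs_sum_aD_sub_le (h3 : 3 * k ≤ ℓ)
    (hD : degD D + 5 * k ≤ 2 * ℓ) :
    |∑ s ∈ elements (sections Fq 4 ℓ k), (aD D s : ℝ) - q ^ (4 * ℓ + 4 - 6 * k - degD D)| ≤
      2 * q ^ (3 * ℓ - 3 * k + 5) * 3 ^ D.card := by
  have haD : ∑ s ∈ elements (sections Fq 4 ℓ k), (aD D s : ℝ) = ∑ T ∈ D.powerset,
      (-1) ^ (D \ T).card * ∑ s ∈ elements (sections Fq 4 ℓ k), ∏ P ∈ T, (rP P s : ℝ) := by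
    simp_rw [aD, Int.cast_prod, Int.cast_sub, Int.cast_natCast, Int.cast_one,
      prod_sub_one_eq_sum_powerset, Finset.mul_sum]
    exact Finset.sum_comm
  rw [haD, pow_sub_degD (by omega), ← Finset.sum_sub_distrib]
  simp_rw [← mul_sub]
  calc _ ≤ ∑ T ∈ D.powerset, 2 * q ^ (3 * ℓ - 3 * k + 5) * 2 ^ T.card := by
        refine (Finset.abs_sum_le_sum_abs _ _).trans (Finset.sum_le_sum fun T hT ↦ ?_)
        have hdeg := degD_mono (Finset.mem_powerset.1 hT)
        rw [abs_mul, abs_neg_one_pow, one_mul]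
        exact abs_sum_prod_rP_sub_le h3 (by omega)
    _ = _ := by
        rw [← Finset.mul_sum, sum_powerset_pow_card]
        norm_num

/-! ### Horizontally reducible forms -/

theorem card_filter_evalAt_comp_mul_le (n : ℕ) (b : ℤ) (k : ℕ) (T : Finset (P1Pt Fq)) :
    ((((elements (sections Fq (n + 1) b k)).erase 0).filter
      fun A ↦ ∀ P ∈ T, evalAt P ∘ A = 0).card : ℝ) * q ^ degD T ≤
      q ^ Module.finrank Fq (sections Fq (n + 1) b k) := by
  obtain hempty | ⟨A, hA⟩ := (((elements (sections Fq (n + 1) b k)).erase 0).filter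
      fun A ↦ ∀ P ∈ T, evalAt P ∘ A = 0).eq_empty_or_nonempty
  · rw [hempty, Finset.card_empty, Nat.cast_zero, zero_mul]
    positivity
  simp only [Finset.mem_filter, Finset.mem_erase, mem_elements] at hA
  have hdeg := degD_le_of_evalAt_comp_eq_zero hA.1.2 hA.1.1 hA.2
  rw [← degD_add_finrank_sectionsThrough_none (hdeg.trans (by omega)), pow_add, mul_comm,
    ← card_elements]
  gcongr
  intro A hA
  simp only [Finset.mem_filter, Finset.mem_erase, mem_elements, mem_sectionsThrough] at hA ⊢
  exact ⟨hA.1.2, fun P hP ↦ (formEval_homCoords_none _).trans (congrFun (hA.2 P hP) 0)⟩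

/-- An upper bound, up to an additive constant, for the number of rational zeros of the form `A` on
the fibre over `P`: the size of the residue field if `A` vanishes on the whole fibre, and zero
otherwise. -/
def fiberExcess (P : P1Pt Fq) (A : Fin n → CoordRing Fq) : ℝ :=
  if evalAt P ∘ A = 0 then q ^ P.deg else 0

theorem fiberExcess_nonneg (P : P1Pt Fq) (A : Fin n → CoordRing Fq) : 0 ≤ fiberExcess P A := by
  rw [fiberExcess]
  split_ifs <;> positivity

theorem sum_prod_add_fiberExcess_le (n : ℕ) (b : ℤ) (k : ℕ) (D : Finset (P1Pt Fq)) {r : ℝ}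
    (hr : 0 ≤ r) :
    ∑ A ∈ (elements (sections Fq (n + 1) b k)).erase 0, ∏ P ∈ D, (r + fiberExcess P A) ≤
      (r + 1) ^ D.card * q ^ Module.finrank Fq (sections Fq (n + 1) b k) := by
  have hexpand (A : Fin (n + 1) → CoordRing Fq) : ∏ P ∈ D, (r + fiberExcess P A) =
      ∑ T ∈ D.powerset, r ^ T.card *
        ((if ∀ P ∈ D \ T, evalAt P ∘ A = 0 then 1 else 0) * q ^ degD (D \ T)) := by
    simp_rw [Finset.prod_add, Finset.prod_const, fiberExcess, Finset.prod_ite_zero, ← pow_degD,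
      ite_mul, one_mul, zero_mul]
  simp_rw [hexpand]
  rw [Finset.sum_comm, ← sum_powerset_pow_card, Finset.sum_mul]
  refine Finset.sum_le_sum fun T _ ↦ ?_
  rw [← Finset.mul_sum, ← Finset.sum_mul, Finset.sum_boole]
  gcongr
  exact card_filter_evalAt_comp_mul_le n b k (D \ T)

theorem fiberExcess_mulLinear_le (P : P1Pt Fq) (C : Fin 2 → CoordRing Fq)
    (B : Fin n → CoordRing Fq) :
    fiberExcess P (mulLinear C B) ≤ fiberExcess P B + fiberExcess P C := by
  by_cases h : evalAt P ∘ mulLinear C B = 0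
  · have hfactor : evalAt P ∘ C = 0 ∨ evalAt P ∘ B = 0 := or_iff_not_imp_left.2 fun hC ↦
      eq_zero_of_mulLinear_eq_zero hC ((map_mulLinear (evalAt P).toRingHom C B).symm.trans h)
    obtain hC | hB := hfactor
    · rw [fiberExcess, if_pos h, fiberExcess, fiberExcess, if_pos hC]
      exact le_add_of_nonneg_left (fiberExcess_nonneg P B)
    · rw [fiberExcess, if_pos h, fiberExcess, if_pos hB]
      exact le_add_of_nonneg_right (fiberExcess_nonneg P C)
  · rw [fiberExcess, if_neg h]
    exact add_nonneg (fiberExcess_nonneg P B) (fiberExcess_nonneg P C)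

theorem abs_rP_sub_one_le (P : P1Pt Fq) (s : Fin 4 → CoordRing Fq) :
    |(rP P s : ℝ) - 1| ≤ 2 + fiberExcess P s := by
  rw [rP_eq_sum, Finset.sum_boole, abs_le, fiberExcess]
  split_ifs with h
  · have hcard :=
      Finset.card_le_univ (Finset.univ.filter fun z : Option P.Res ↦ fiberEval P z s = 0)
    rw [Fintype.card_option] at hcard
    rw [← Nat.cast_le (α := ℝ), Nat.cast_succ, P1Pt.card_res] at hcard
    constructor <;> linarith [Nat.cast_nonneg (α := ℝ)
      (Finset.univ.filter fun z : Option P.Res ↦ fiberEval P z s = 0).card]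
  · have hcard := (Nat.cast_le (α := ℝ)).2 (card_filter_fiberEval_le h)
    push_cast at hcard
    constructor <;> linarith

theorem abs_aD_le (D : Finset (P1Pt Fq)) (s : Fin 4 → CoordRing Fq) :
    |(aD D s : ℝ)| ≤ ∏ P ∈ D, (2 + fiberExcess P s) := by
  rw [aD, Int.cast_prod, Finset.abs_prod]
  refine Finset.prod_le_prod (fun _ _ ↦ abs_nonneg _) fun P _ ↦ ?_
  simpa using abs_rP_sub_one_le P s

theorem aD_zero (D : Finset (P1Pt Fq)) : (aD D 0 : ℝ) = q ^ degD D := by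
  simp [aD, rP_eq_sum, pow_degD, P1Pt.card_res]

theorem prod_add_fiberExcess_mulLinear_le (D : Finset (P1Pt Fq)) (C : Fin 2 → CoordRing Fq)
    (B : Fin n → CoordRing Fq) :
    ∏ P ∈ D, (2 + fiberExcess P (mulLinear C B)) ≤
      (∏ P ∈ D, (2 + fiberExcess P B)) * ∏ P ∈ D, (1 + fiberExcess P C) := by
  rw [← Finset.prod_mul_distrib]
  refine Finset.prod_le_prod (fun P _ ↦ add_nonneg zero_le_two (fiberExcess_nonneg P _))
    fun P _ ↦ ?_
  nlinarith [fiberExcess_mulLinear_le P C B, fiberExcess_nonneg P B, fiberExcess_nonneg P C]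

theorem sum_prod_add_fiberExcess_mulLinear_le (b c : ℤ) (k : ℕ) (D : Finset (P1Pt Fq)) :
    ∑ B ∈ (elements (sections Fq 3 b k)).erase 0, ∑ C ∈ (elements (sections Fq 2 c k)).erase 0,
      ∏ P ∈ D, (2 + fiberExcess P (mulLinear C B)) ≤
    6 ^ D.card *
      q ^ (Module.finrank Fq (sections Fq 2 c k) + Module.finrank Fq (sections Fq 3 b k)) := by
  calc _ ≤ ∑ B ∈ (elements (sections Fq 3 b k)).erase 0,
        ∑ C ∈ (elements (sections Fq 2 c k)).erase 0,
          (∏ P ∈ D, (2 + fiberExcess P B)) * ∏ P ∈ D, (1 + fiberExcess P C) :=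
        Finset.sum_le_sum fun B _ ↦ Finset.sum_le_sum fun C _ ↦
          prod_add_fiberExcess_mulLinear_le D C B
    _ = (∑ B ∈ (elements (sections Fq 3 b k)).erase 0, ∏ P ∈ D, (2 + fiberExcess P B)) *
          ∑ C ∈ (elements (sections Fq 2 c k)).erase 0, ∏ P ∈ D, (1 + fiberExcess P C) :=
        (Finset.sum_mul_sum _ _ _ _).symm
    _ ≤ ((2 + 1) ^ D.card * q ^ Module.finrank Fq (sections Fq 3 b k)) *
          ((1 + 1) ^ D.card * q ^ Module.finrank Fq (sections Fq 2 c k)) :=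
        mul_le_mul (sum_prod_add_fiberExcess_le 2 b k D zero_le_two)
          (sum_prod_add_fiberExcess_le 1 c k D zero_le_one)
          (Finset.sum_nonneg fun C _ ↦ Finset.prod_nonneg fun P _ ↦
            add_nonneg zero_le_one (fiberExcess_nonneg P C)) (by positivity)
    _ = _ := by
        rw [mul_mul_mul_comm, ← mul_pow, pow_add, mul_comm (q ^ _)]
        norm_num

theorem sum_abs_aD_horizRed_erase_le (h3 : 3 * k ≤ ℓ) (D : Finset (P1Pt Fq)) :
    ∑ s ∈ ((elements (sections Fq 4 ℓ k)).filter (HorizRed k)).erase 0, |(aD D s : ℝ)| ≤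
      6 ^ D.card * (2 * q ^ (3 * ℓ - 3 * k + 5)) := by
  calc _ ≤ ∑ t ∈ (linearDegrees ℓ k).sigma fun c ↦ (elements (sections Fq 3 (ℓ - c) k)).erase 0 ×ˢ
          (elements (sections Fq 2 c k)).erase 0, |(aD D (mulLinear t.2.2 t.2.1) : ℝ)| := by
        refine sum_le_sum_of_forall_exists_eq (fun s ↦ abs_nonneg _) fun s hs ↦ ?_
        obtain ⟨hs0, hs⟩ := Finset.mem_erase.1 hs
        obtain ⟨hs, hred⟩ := Finset.mem_filter.1 hs
        obtain ⟨c, hc, B, hB, C, hC, rfl⟩ :=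
          exists_mulLinear_eq_of_horizRed (mem_elements.1 hs) hred
        have hB0 : B ≠ 0 := by
          rintro rfl
          exact hs0 (map_zero _)
        have hC0 : C ≠ 0 := by
          rintro rfl
          exact hs0 (by simp [mulLinear_apply])
        exact ⟨⟨c, B, C⟩, by simp [mem_elements, *], rfl⟩
    _ ≤ ∑ c ∈ linearDegrees ℓ k, 6 ^ D.card * q ^ (Module.finrank Fq (sections Fq 2 c k) +
          Module.finrank Fq (sections Fq 3 (ℓ - c) k)) := by
        rw [Finset.sum_sigma]
        refine Finset.sum_le_sum fun c _ ↦ ?_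
        rw [Finset.sum_product]
        exact (Finset.sum_le_sum fun B _ ↦ Finset.sum_le_sum fun C _ ↦ abs_aD_le D _).trans
          (sum_prod_add_fiberExcess_mulLinear_le _ _ k D)
    _ ≤ _ := by
        rw [← Finset.mul_sum]
        gcongr
        exact sum_linearDegrees_le h3

theorem sum_abs_aD_horizRed_le (h3 : 3 * k ≤ ℓ) (hD : degD D + 5 * k ≤ 2 * ℓ) :
    ∑ s ∈ (elements (sections Fq 4 ℓ k)).filter (HorizRed k), |(aD D s : ℝ)| ≤
      3 * (6 ^ D.card * q ^ (3 * ℓ - 3 * k + 5)) := by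
  have hmem : (0 : Fin 4 → CoordRing Fq) ∈ (elements (sections Fq 4 ℓ k)).filter (HorizRed k) :=
    Finset.mem_filter.2 ⟨mem_elements.2 (zero_mem _), Or.inl rfl⟩
  have hzero : |(aD D (0 : Fin 4 → CoordRing Fq) : ℝ)| ≤
      6 ^ D.card * q ^ (3 * ℓ - 3 * k + 5) := by
    rw [aD_zero, abs_of_nonneg (by positivity)]
    exact (pow_le_pow_right₀ one_le_card (by omega)).trans
      (le_mul_of_one_le_left (by positivity) (one_le_pow₀ (by norm_num)))
  rw [← Finset.add_sum_erase _ _ hmem]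
  linarith [sum_abs_aD_horizRed_erase_le h3 D]

theorem finsum_aD_eq (ℓ k : ℕ) (D : Finset (P1Pt Fq)) :
    ((∑ᶠ s ∈ {s ∈ SecSet 3 ℓ k | ¬ HorizRed k s}, aD D s : ℤ) : ℝ) =
      ∑ s ∈ elements (sections Fq 4 ℓ k), (aD D s : ℝ) -
        ∑ s ∈ (elements (sections Fq 4 ℓ k)).filter (HorizRed k), (aD D s : ℝ) := by
  have hset : ({s ∈ SecSet 3 ℓ k | ¬ HorizRed k s} : Set (Fin 4 → CoordRing Fq)) =
      ↑((elements (sections Fq 4 ℓ k)).filter fun s ↦ ¬ HorizRed k s) := by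
    ext s
    rw [Finset.coe_filter, Set.mem_ofPred_eq, Set.mem_ofPred_eq, mem_elements, mem_sections]
    rfl
  rw [hset, finsum_mem_coe_finset, eq_sub_iff_add_eq', Int.cast_sum,
    Finset.sum_filter_add_sum_filter_not]

theorem abs_finsum_aD_sub_le (h3 : 3 * k ≤ ℓ) (hD : degD D + 5 * k ≤ 2 * ℓ) :
    |((∑ᶠ s ∈ {s ∈ SecSet 3 ℓ k | ¬ HorizRed k s}, aD D s : ℤ) : ℝ) -
        q ^ (4 * ℓ + 4 - 6 * k - degD D)| ≤
      5 * (6 ^ D.card * q ^ (3 * ℓ - 3 * k + 5)) := by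
  have hpow : (3 : ℝ) ^ D.card ≤ 6 ^ D.card := by gcongr; norm_num
  calc _ = |(∑ s ∈ elements (sections Fq 4 ℓ k), (aD D s : ℝ) -
          q ^ (4 * ℓ + 4 - 6 * k - degD D)) -
          ∑ s ∈ (elements (sections Fq 4 ℓ k)).filter (HorizRed k), (aD D s : ℝ)| := by
        rw [finsum_aD_eq, sub_right_comm]
    _ ≤ 2 * q ^ (3 * ℓ - 3 * k + 5) * 3 ^ D.card +
          3 * (6 ^ D.card * q ^ (3 * ℓ - 3 * k + 5)) :=
        (abs_sub _ _).trans (add_le_add (abs_sum_aD_sub_le h3 hD)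
          ((Finset.abs_sum_le_sum_abs _ _).trans (sum_abs_aD_horizRed_le h3 hD)))
    _ ≤ 2 * q ^ (3 * ℓ - 3 * k + 5) * 6 ^ D.card +
          3 * (6 ^ D.card * q ^ (3 * ℓ - 3 * k + 5)) := by gcongr
    _ = _ := by ring

end Counting

/-- Let `ℓ, k ≥ 0` and `D` a reduced effective divisor on `P¹`
with `ℓ ≥ 3k` and `ℓ − 2k ≥ (deg D + k)/2` (i.e. `deg D + 5k ≤ 2ℓ`).  Then
`Φ^{ir}(ℓ,k,D) = q^{4ℓ−6k+4−deg D} + O(6^{ω(D)} q^{3ℓ−3k})`, and if in addition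
`deg D > ℓ` (the medium range) then `Φ^{ir}(ℓ,k,D) = O(6^{ω(D)} q^{3ℓ−3k})`;
implied constants depend only on `q`. -/
theorem statement_18 (Fq : Type) [Field Fq] [Fintype Fq] :
    ∃ K : ℕ, 0 < K ∧
      ∀ (ℓ k : ℕ) (D : Finset (P1Pt Fq)), 3 * k ≤ ℓ → degD D + 5 * k ≤ 2 * ℓ →
        (|(∑ᶠ s ∈ {s ∈ SecSet 3 ℓ k | ¬ HorizRed k s}, aD D s) -
              (Fintype.card Fq : ℤ) ^ (4 * ℓ + 4 - 6 * k - degD D)| ≤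
            (K : ℤ) * 6 ^ D.card * (Fintype.card Fq : ℤ) ^ (3 * ℓ - 3 * k)) ∧
        (ℓ < degD D →
          |∑ᶠ s ∈ {s ∈ SecSet 3 ℓ k | ¬ HorizRed k s}, aD D s| ≤
            (K : ℤ) * 6 ^ D.card * (Fintype.card Fq : ℤ) ^ (3 * ℓ - 3 * k)) := by
  refine ⟨6 * Fintype.card Fq ^ 5, by positivity, fun ℓ k D h3 hD ↦ ?_⟩
  set Φ : ℤ := ∑ᶠ s ∈ {s ∈ SecSet 3 ℓ k | ¬ HorizRed k s}, aD D s
  set M : ℤ := 6 ^ D.card * (Fintype.card Fq : ℤ) ^ (3 * ℓ - 3 * k + 5)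
  have hM : ((6 * Fintype.card Fq ^ 5 : ℕ) : ℤ) * 6 ^ D.card * (Fintype.card Fq : ℤ) ^
      (3 * ℓ - 3 * k) = 6 * M := by
    simp only [M]
    push_cast
    ring
  have hΦ : |Φ - (Fintype.card Fq : ℤ) ^ (4 * ℓ + 4 - 6 * k - degD D)| ≤ 5 * M := by
    exact_mod_cast abs_finsum_aD_sub_le h3 hD
  have hM0 : 0 ≤ M := by positivity
  rw [hM]
  refine ⟨hΦ.trans (by linarith), fun hmedium ↦ ?_⟩
  have hmain : (Fintype.card Fq : ℤ) ^ (4 * ℓ + 4 - 6 * k - degD D) ≤ M :=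
    (pow_le_pow_right₀ (by exact_mod_cast Fintype.card_pos) (by omega)).trans
      (le_mul_of_one_le_left (by positivity) (one_le_pow₀ (by norm_num)))
  have hmain0 : 0 ≤ (Fintype.card Fq : ℤ) ^ (4 * ℓ + 4 - 6 * k - degD D) := by positivity
  rw [abs_le] at hΦ ⊢
  constructor <;> linarith

end Stmt18
end
end
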